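/- arXiv:2309.10368 — 4 statements merged into one kernel-verified Lean document; each statement's English description precedes it below -/
import Mathlib

section
/- For every natural number m ≥ 2 there exists a finite set X of n = 4m−3 points on the real line, a number of clusters k = 2m−1, an initial partition of X into k nonempty clusters, and a sequence of at least 2^(m−1) successive partitions of X into k clusters such that each partition in the sequence is obtained from the previous one by reassigning a single point to a different cluster and each such reassignment strictly decreases the k-means potential Φ. (Hence the Hartigan–Wong method can take 2^(Ω(n)) iterations to converge on instances on the line.) -/
/-- Center of mass of a finite set of points on the real line. -/
noncomputable def cm1 (S : Finset ℝ) : ℝ := (S.card : ℝ)⁻¹ * ∑ x ∈ S, x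

/-- `k`-means potential of a single cluster of points on the line. -/
noncomputable def pot1 (S : Finset ℝ) : ℝ := ∑ x ∈ S, (x - cm1 S) ^ 2

/-- `C'` is obtained from `C` by reassigning a single point `x` from cluster `i` to a
different cluster `j`. -/
def IsSinglePointMove {k : ℕ} (C C' : Fin k → Finset ℝ) : Prop :=
  ∃ (i j : Fin k) (x : ℝ), i ≠ j ∧ x ∈ C i ∧
    C' i = (C i).erase x ∧ C' j = insert x (C j) ∧
    ∀ l : Fin k, l ≠ i → l ≠ j → C' l = C l

/-- `C` is a partition of the point set `X` into `k` (possibly empty) clusters. -/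
def IsPartitionOf {k : ℕ} (X : Finset ℝ) (C : Fin k → Finset ℝ) : Prop :=
  (∀ i j : Fin k, i ≠ j → Disjoint (C i) (C j)) ∧ (⋃ i : Fin k, (C i : Set ℝ)) = ↑X

/-!
A point pays for its membership in a cluster an amount that depends only on the other members, and
a move is improving iff it lowers this amount. Gadget `i` has two clusters, held in place by anchors
at `-4 ^ i` and `11 * 4 ^ i`, and two mobile points at `-15 * 4 ^ i` and `-7 * 4 ^ i`. It is asleep
when the mobile points are with the low anchor and awake when they are with the high one.

A traveller from the gadget above can pass a sleeping gadget by way of its high and then its low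
cluster. Its presence in the high cluster attracts one mobile point there, its presence in the low
cluster expels the other one, and so it leaves the gadget awake. An awake gadget falls asleep again
by sending its two mobile points, one after the other, through the gadget below. Every level thus
doubles the number of moves; below gadget `0` the travellers use a leaf cluster anchored at `0`.
-/

open Function

namespace HartiganWong

/-! ### The potential of a single cluster -/

/-- The increase of the potential of the cluster `S` when a point at `y ∉ S` joins it. -/
noncomputable def insertionCost (S : Finset ℝ) (y : ℝ) : ℝ :=
  (S.card : ℝ) / (S.card + 1) * (y - cm1 S) ^ 2

theorem pot1_eq_sum_sq_sub (S : Finset ℝ) :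
    pot1 S = ∑ x ∈ S, x ^ 2 - (∑ x ∈ S, x) ^ 2 / S.card := by
  rcases S.eq_empty_or_nonempty with rfl | hS
  · simp [pot1]
  · have hcard : (S.card : ℝ) ≠ 0 := by exact_mod_cast hS.card_pos.ne'
    simp only [pot1, cm1, sub_sq, Finset.sum_add_distrib, Finset.sum_sub_distrib,
      Finset.sum_const, nsmul_eq_mul, ← Finset.sum_mul, ← Finset.mul_sum, mul_assoc]
    field

theorem pot1_insert {S : Finset ℝ} {y : ℝ} (hy : y ∉ S) :
    pot1 (insert y S) = pot1 S + insertionCost S y := by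
  rcases S.eq_empty_or_nonempty with rfl | hS
  · simp [pot1_eq_sum_sq_sub, insertionCost]
  · have hcard : (S.card : ℝ) ≠ 0 := by exact_mod_cast hS.card_pos.ne'
    have hcard' : (S.card : ℝ) + 1 ≠ 0 := by positivity
    simp only [pot1_eq_sum_sq_sub, insertionCost, cm1, Finset.sum_insert hy,
      Finset.card_insert_of_notMem hy, Nat.cast_add, Nat.cast_one]
    field

theorem insertionCost_singleton (u y : ℝ) : insertionCost {u} y = (y - u) ^ 2 / 2 := by
  simp only [insertionCost, cm1, Finset.card_singleton, Finset.sum_singleton, Nat.cast_one]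
  ring

theorem insertionCost_pair {u v : ℝ} (huv : u ≠ v) (y : ℝ) :
    insertionCost {u, v} y = (2 * y - u - v) ^ 2 / 6 := by
  simp only [insertionCost, cm1, Finset.card_pair huv, Finset.sum_pair huv, Nat.cast_ofNat]
  ring

/-! ### Assignments of points to clusters -/

section Assignment

variable {P ι : Type*} [Fintype P] [DecidableEq ι]

/-- The positions, given by `x`, of the points that the assignment `a` puts into cluster `c`. -/
noncomputable def cluster (x : P → ℝ) (a : P → ι) (c : ι) : Finset ℝ :=
  ({q | a q = c} : Finset P).image x

/-- The `k`-means potential of an assignment. -/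
noncomputable def potential [Fintype ι] (x : P → ℝ) (a : P → ι) : ℝ :=
  ∑ c, pot1 (cluster x a c)

/-- The positions of the points other than `p` that `a` puts into cluster `c`. -/
noncomputable def others [DecidableEq P] (x : P → ℝ) (a : P → ι) (p : P) (c : ι) : Finset ℝ :=
  ({q | q ≠ p ∧ a q = c} : Finset P).image x

/-- What the membership of the point `p` in cluster `c` adds to the potential when all other
points are assigned by `a`; it does not depend on `a p`. -/
noncomputable def memberCost [DecidableEq P] (x : P → ℝ) (a : P → ι) (p : P) (c : ι) : ℝ :=
  insertionCost (others x a p c) (x p)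

variable {x : P → ℝ} {a : P → ι} {p : P} {c : ι}

theorem cluster_symm_comp {κ : Type*} [DecidableEq κ] (e : κ ≃ ι) (k : κ) :
    cluster x (e.symm ∘ a) k = cluster x a (e k) := by
  simp [cluster, Equiv.symm_apply_eq]

theorem potential_symm_comp [Fintype ι] {κ : Type*} [Fintype κ] [DecidableEq κ] (e : κ ≃ ι) :
    potential x (e.symm ∘ a) = potential x a := by
  simp only [potential, cluster_symm_comp, e.sum_comp fun c => pot1 (cluster x a c)]

theorem nonempty_cluster (ha : Surjective a) (c : ι) : (cluster x a c).Nonempty := by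
  obtain ⟨q, hq⟩ := ha c
  exact ⟨x q, Finset.mem_image_of_mem x (by simpa using hq)⟩

theorem isPartitionOf_cluster {k : ℕ} (hx : Injective x) (a : P → Fin k) :
    IsPartitionOf (Finset.univ.image x) (cluster x a) := by
  refine ⟨fun i j hij => (Finset.disjoint_image hx).2 (Finset.disjoint_filter.2 ?_), ?_⟩
  · rintro q - rfl
    exact hij
  · ext y
    simp [cluster]

variable [DecidableEq P]

theorem notMem_others (hx : Injective x) : x p ∉ others x a p c := by
  rw [others, hx.mem_finset_image]
  simp

theorem others_update (d : ι) : others x (update a p d) p c = others x a p c := by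
  unfold others
  congr 1
  grind [update_of_ne]

theorem cluster_eq_others (hp : a p ≠ c) : cluster x a c = others x a p c := by
  unfold cluster others
  congr 1
  grind

theorem cluster_eq_insert_others (hp : a p = c) :
    cluster x a c = insert (x p) (others x a p c) := by
  rw [cluster, others, ← Finset.image_insert]
  congr 1
  grind

theorem isSinglePointMove_update {k : ℕ} {a : P → Fin k} {c : Fin k} (hx : Injective x)
    (hc : c ≠ a p) : IsSinglePointMove (cluster x a) (cluster x (update a p c)) := by
  refine ⟨a p, c, x p, hc.symm, ?_, ?_, ?_, fun d hd hdc => ?_⟩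
  · rw [cluster_eq_insert_others rfl]
    exact Finset.mem_insert_self ..
  · rw [cluster_eq_others (p := p) (by simpa using hc), others_update,
      cluster_eq_insert_others rfl, Finset.erase_insert (notMem_others hx)]
  · rw [cluster_eq_insert_others (update_self p c a), others_update, cluster_eq_others hc.symm]
  · rw [cluster_eq_others (p := p) (by simpa using hdc.symm), others_update,
      cluster_eq_others hd.symm]

theorem memberCost_update (d : ι) : memberCost x (update a p d) p c = memberCost x a p c := by
  simp only [memberCost, others_update]

theorem memberCost_congr {b : P → ι} (h : ∀ q ≠ p, a q = c ↔ b q = c) :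
    memberCost x a p c = memberCost x b p c := by
  unfold memberCost others
  congr 2
  grind

theorem memberCost_eq_of_forall_iff {r : P} (hr : r ≠ p) (h : ∀ q ≠ p, a q = c ↔ q = r) :
    memberCost x a p c = (x p - x r) ^ 2 / 2 := by
  have hothers : others x a p c = {x r} := by
    rw [others, ← Finset.image_singleton]
    congr 1
    grind
  rw [memberCost, hothers, insertionCost_singleton]

theorem memberCost_eq_of_forall_iff_or {r t : P} (hx : Injective x) (hrt : r ≠ t) (hr : r ≠ p)
    (ht : t ≠ p) (h : ∀ q ≠ p, a q = c ↔ q = r ∨ q = t) :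
    memberCost x a p c = (2 * x p - x r - x t) ^ 2 / 6 := by
  have hothers : others x a p c = {x r, x t} := by
    rw [others, ← Finset.image_singleton, ← Finset.image_insert]
    congr 1
    grind
  rw [memberCost, hothers, insertionCost_pair (hx.ne hrt)]

variable [Fintype ι]

theorem potential_eq_add_memberCost (hx : Injective x) (a : P → ι) (p : P) :
    potential x a = ∑ c, pot1 (others x a p c) + memberCost x a p (a p) := by
  have hpot (c : ι) : pot1 (cluster x a c) =
      pot1 (others x a p c) + if a p = c then memberCost x a p c else 0 := by
    split_ifs with hp
    · rw [cluster_eq_insert_others hp, pot1_insert (notMem_others hx), memberCost]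
    · rw [cluster_eq_others hp, add_zero]
  simp [potential, hpot, Finset.sum_add_distrib]

theorem potential_update_lt_iff (hx : Injective x) :
    potential x (update a p c) < potential x a ↔ memberCost x a p c < memberCost x a p (a p) := by
  simp [potential_eq_add_memberCost hx _ p, others_update, memberCost_update]

/-- The reassignments of a single point that strictly decrease the potential, as a relation
between assignments. -/
def improvingMoves (x : P → ℝ) : SetRel (P → ι) (P → ι) :=
  {(a, b) | (∃ p c, b = update a p c) ∧ potential x b < potential x a}

/-- The assignment `b` is reached from `a` by at least `N` consecutive improving moves. -/
def ImprovingPath (x : P → ℝ) (N : ℕ) (a b : P → ι) : Prop :=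
  ∃ s : RelSeries (improvingMoves (ι := ι) x), s.head = a ∧ s.last = b ∧ N ≤ s.length

theorem ImprovingPath.trans {M N : ℕ} {a b d : P → ι} (hab : ImprovingPath x M a b)
    (hbd : ImprovingPath x N b d) : ImprovingPath x (M + N) a d := by
  obtain ⟨s, rfl, rfl, hs⟩ := hab
  obtain ⟨t, ht, rfl, ht'⟩ := hbd
  exact ⟨s.smash t ht.symm, by simp, by simp, Nat.add_le_add hs ht'⟩

theorem ImprovingPath.mono {M N : ℕ} {a b : P → ι} (h : ImprovingPath x N a b) (hMN : M ≤ N) :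
    ImprovingPath x M a b :=
  h.imp fun _ hs => ⟨hs.1, hs.2.1, hMN.trans hs.2.2⟩

theorem improvingPath_update (hx : Injective x)
    (h : memberCost x a p c < memberCost x a p (a p)) : ImprovingPath x 1 a (update a p c) :=
  have hmem : (a, update a p c) ∈ improvingMoves x :=
    ⟨⟨p, c, rfl⟩, (potential_update_lt_iff hx).2 h⟩
  ⟨⟨1, ![a, update a p c], Fin.forall_fin_one.2 hmem⟩, rfl, rfl, le_rfl⟩

theorem improvingPath_update_update {d : ι} (hx : Injective x)
    (h : memberCost x a p d < memberCost x a p c) :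
    ImprovingPath x 1 (update a p c) (update a p d) := by
  rw [← update_idem c d a]
  exact improvingPath_update hx (by simpa only [memberCost_update, update_self] using h)

theorem isSinglePointMove_of_mem_improvingMoves {k : ℕ} (hx : Injective x) (e : Fin k ≃ ι)
    {a b : P → ι} (hab : (a, b) ∈ improvingMoves x) :
    IsSinglePointMove (cluster x (e.symm ∘ a)) (cluster x (e.symm ∘ b)) := by
  obtain ⟨⟨p, c, rfl⟩, hlt⟩ := hab
  rw [comp_update]
  refine isSinglePointMove_update hx fun hc => hlt.ne ?_
  rw [update_eq_self_iff.2 (e.symm.injective hc)]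

theorem ImprovingPath.exists_seq {k N : ℕ} {a b : P → ι} (h : ImprovingPath x N a b)
    (hx : Injective x) (ha : Surjective a) (e : Fin k ≃ ι) :
    ∃ L, N ≤ L ∧ ∃ seq : ℕ → Fin k → Finset ℝ,
      (∀ t ≤ L, IsPartitionOf (Finset.univ.image x) (seq t)) ∧ (∀ i, (seq 0 i).Nonempty) ∧
      ∀ t < L, IsSinglePointMove (seq t) (seq (t + 1)) ∧
        ∑ i, pot1 (seq (t + 1) i) < ∑ i, pot1 (seq t i) := by
  obtain ⟨s, rfl, -, hN⟩ := h
  refine ⟨s.length, hN, fun t => cluster x (e.symm ∘ s (Fin.ofNat _ t)),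
    fun _ _ => isPartitionOf_cluster hx _, ?_, fun t ht => ?_⟩
  · exact nonempty_cluster (e.symm.surjective.comp ha)
  · have hstep : (s (Fin.ofNat _ t), s (Fin.ofNat _ (t + 1))) ∈ improvingMoves x := by
      convert s.step ⟨t, ht⟩ using 3 <;> ext <;> simp <;> omega
    exact ⟨isSinglePointMove_of_mem_improvingMoves hx e hstep,
      (potential_symm_comp e).trans_lt (hstep.2.trans_eq (potential_symm_comp e).symm)⟩

end Assignment

/-! ### The instance -/

/-- The two clusters of a gadget. -/
inductive Side
  | low
  | high
  deriving DecidableEq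

instance : Fintype Side := ⟨{.low, .high}, by rintro (_ | _) <;> decide⟩

/-- The four points of a gadget: an anchor for each of its clusters, which never moves, and two
mobile points. -/
inductive Role
  | anchor (side : Side)
  | outer
  | inner
  deriving DecidableEq, Fintype

/-- The points of the instance with `n` gadgets; `none` is the anchor of the leaf cluster. -/
abbrev Point (n : ℕ) : Type := Option (Fin n × Role)

/-- The clusters of the instance with `n` gadgets; `none` is the leaf cluster. -/
abbrev Cluster (n : ℕ) : Type := Option (Fin n × Side)

/-- The position of a point of gadget `0`. -/
def offset : Role → ℤ
  | .anchor .low => -1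
  | .anchor .high => 11
  | .outer => -15
  | .inner => -7

/-- The positions on the line: gadget `i` is a copy of gadget `0` scaled by `4 ^ i`. -/
noncomputable def position {n : ℕ} : Point n → ℝ
  | none => 0
  | some (i, r) => 4 ^ (i : ℕ) * (offset r : ℝ)

section Position

variable {n : ℕ} (i : Fin n)

theorem position_low : position (some (i, .anchor .low)) = -4 ^ (i : ℕ) := by
  simp [position, offset]

theorem position_high : position (some (i, .anchor .high)) = 11 * 4 ^ (i : ℕ) := by
  simp [position, offset, mul_comm]

theorem position_outer : position (some (i, .outer)) = -15 * 4 ^ (i : ℕ) := by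
  simp [position, offset, mul_comm]

theorem position_inner : position (some (i, .inner)) = -7 * 4 ^ (i : ℕ) := by
  simp [position, offset, mul_comm]

end Position

theorem card_point (n : ℕ) : Fintype.card (Point n) = 4 * n + 1 := by
  have hrole : Fintype.card Role = 4 := rfl
  rw [Fintype.card_option, Fintype.card_prod, Fintype.card_fin, hrole, mul_comm]

theorem card_cluster (n : ℕ) : Fintype.card (Cluster n) = 2 * n + 1 := by
  have hside : Fintype.card Side = 2 := rfl
  rw [Fintype.card_option, Fintype.card_prod, Fintype.card_fin, hside, mul_comm]

theorem pow_mul_inj_of_not_dvd {α : Type*} [CommMonoidWithZero α] [IsCancelMulZero α]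
    {b z w : α} (hb : b ≠ 0) (hz : ¬ b ∣ z) (hw : ¬ b ∣ w) {i j : ℕ}
    (h : b ^ i * z = b ^ j * w) : i = j ∧ z = w := by
  wlog hij : i ≤ j generalizing i j z w
  · simpa only [eq_comm] using this hw hz h.symm (le_of_not_ge hij)
  obtain ⟨d, rfl⟩ := Nat.exists_eq_add_of_le hij
  rw [pow_add, mul_assoc, mul_right_inj' (pow_ne_zero i hb)] at h
  cases d with
  | zero => simpa using h
  | succ d => exact absurd ⟨b ^ d * w, by rw [h, pow_succ']; ac_rfl⟩ hz

theorem offset_injective : Injective offset := by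
  decide

theorem not_four_dvd_offset (r : Role) : ¬ 4 ∣ offset r := by
  decide +revert

theorem position_injective (n : ℕ) : Injective (position (n := n)) := by
  have hne (i : Fin n) (r : Role) : 4 ^ (i : ℕ) * (offset r : ℝ) ≠ 0 := by
    have : offset r ≠ 0 := fun h => not_four_dvd_offset r (by simp [h])
    positivity
  rintro (_ | ⟨i, r⟩) (_ | ⟨j, t⟩) h
  · rfl
  · exact absurd h.symm (hne j t)
  · exact absurd h (hne i r)
  · have hint : (4 : ℤ) ^ (i : ℕ) * offset r = 4 ^ (j : ℕ) * offset t := by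
      simp only [position] at h
      exact_mod_cast h
    obtain ⟨hij, hrt⟩ := pow_mul_inj_of_not_dvd four_ne_zero (not_four_dvd_offset r)
      (not_four_dvd_offset t) hint
    rw [Fin.ext hij, offset_injective hrt]

/-! ### Improving paths through the gadgets -/

section Gadget

variable {n : ℕ}

/-- Gadget `i` is asleep: both of its mobile points are in its low cluster. -/
def IsAsleep (a : Point n → Cluster n) (i : Fin n) : Prop :=
  (∀ q, a q = some (i, .low) ↔
    q = some (i, .anchor .low) ∨ q = some (i, .outer) ∨ q = some (i, .inner)) ∧
  ∀ q, a q = some (i, .high) ↔ q = some (i, .anchor .high)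

/-- Gadget `i` is awake: both of its mobile points are in its high cluster. -/
def IsAwake (a : Point n → Cluster n) (i : Fin n) : Prop :=
  (∀ q, a q = some (i, .low) ↔ q = some (i, .anchor .low)) ∧
  ∀ q, a q = some (i, .high) ↔
    q = some (i, .anchor .high) ∨ q = some (i, .outer) ∨ q = some (i, .inner)

/-- The leaf cluster holds only its anchor and the gadgets below `i` are asleep. -/
def IsDormantBelow (a : Point n → Cluster n) (i : Fin n) : Prop :=
  (∀ q, a q = none ↔ q = none) ∧ ∀ j < i, IsAsleep a j

/-- The cluster `c` belongs to gadget `i` or to a later one. -/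
def IsFromLevel (i : Fin n) (c : Cluster n) : Prop :=
  ∃ j ≥ i, ∃ side, c = some (j, side)

/-- The point `y` can travel from its cluster to `v` by way of what lies below gadget `i`. The
bounds are those of the gadget one level below, in whose scale they read `-63`, `-23`, and `11` and
`-1` for the anchors: joining its high cluster from `a y` and leaving its low cluster for `v` are
improving moves, and between the position bounds `y` wakes the gadget on its way. -/
structure IsTraversal (a : Point n → Cluster n) (i : Fin n) (y : Point n) (v : Cluster n) :
    Prop where
  dormant : IsDormantBelow a i
  source : IsFromLevel i (a y)
  target : IsFromLevel i v
  lt_position : -(63 / 4) * 4 ^ (i : ℕ) < position y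
  position_lt : position y < -(23 / 4) * 4 ^ (i : ℕ)
  lt_source_cost : (position y - 11 / 4 * 4 ^ (i : ℕ)) ^ 2 / 2 < memberCost position a y (a y)
  target_cost_lt : memberCost position a y v < (position y + 1 / 4 * 4 ^ (i : ℕ)) ^ 2 / 2

/-- Every traversal below gadget `i` can be carried out by at least `2 ^ i` improving moves. -/
def IsTraversable (i : Fin n) : Prop :=
  ∀ ⦃a : Point n → Cluster n⦄ ⦃y : Point n⦄ ⦃v : Cluster n⦄, IsTraversal a i y v →
    ImprovingPath position (2 ^ (i : ℕ)) a (update a y v)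

/-- Both mobile points of gadget `i` are put into its cluster on the given side. -/
def settle (a : Point n → Cluster n) (i : Fin n) (side : Side) : Point n → Cluster n :=
  update (update a (some (i, .outer)) (some (i, side))) (some (i, .inner)) (some (i, side))

variable {a : Point n → Cluster n} {i : Fin n} {y : Point n} {v : Cluster n}

theorem settle_apply (a : Point n → Cluster n) (i : Fin n) (side : Side) (q : Point n) :
    settle a i side q =
      if q = some (i, .outer) ∨ q = some (i, .inner) then some (i, side) else a q := by
  unfold settle
  grind

theorem isTraversable_zero : IsTraversable (0 : Fin (n + 1)) := by
  rintro a y v ⟨⟨hleaf, -⟩, ⟨j, -, side, hsource⟩, -, -, hpos, hsrc, htgt⟩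
  have hcost : memberCost position a y none = position y ^ 2 / 2 := by
    rw [memberCost_eq_of_forall_iff (r := none) (by grind) fun q _ => hleaf q]
    simp [position]
  simp only [Fin.val_zero, pow_zero, mul_one] at hpos hsrc htgt
  have henter : ImprovingPath position 1 a (update a y none) :=
    improvingPath_update (position_injective _) (by nlinarith)
  have hexit : ImprovingPath position 1 (update a y none) (update a y v) :=
    improvingPath_update_update (position_injective _) (by nlinarith)
  exact (henter.trans hexit).mono (by simp)

theorem IsDormantBelow.update (h : IsDormantBelow a i) (hsource : IsFromLevel i (a y))
    (htarget : IsFromLevel i v) : IsDormantBelow (update a y v) i := by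
  obtain ⟨hleaf, hasleep⟩ := h
  obtain ⟨k, hk, side, rfl⟩ := htarget
  refine ⟨by grind [IsFromLevel], fun j hj => ?_⟩
  obtain ⟨hlow, hhigh⟩ := hasleep j hj
  constructor <;> grind [IsFromLevel]

theorem isTraversal_outer (hdormant : IsDormantBelow a i) (hawake : IsAwake a i) :
    IsTraversal a i (some (i, .outer)) (some (i, .low)) := by
  obtain ⟨hlow, hhigh⟩ := hawake
  have hscale : (0 : ℝ) < 4 ^ (i : ℕ) := by positivity
  have hsource : a (some (i, .outer)) = some (i, .high) := (hhigh _).2 (by simp)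
  refine ⟨hdormant, ⟨i, le_rfl, .high, hsource⟩, ⟨i, le_rfl, .low, rfl⟩, ?_, ?_, ?_, ?_⟩
  · rw [position_outer]
    linarith
  · rw [position_outer]
    linarith
  · rw [hsource, memberCost_eq_of_forall_iff_or (r := some (i, .anchor .high))
      (t := some (i, .inner)) (position_injective _) (by simp) (by simp) (by simp) (by grind),
      position_outer, position_high, position_inner]
    nlinarith
  · rw [memberCost_eq_of_forall_iff (r := some (i, .anchor .low)) (by simp) (by grind),
      position_outer, position_low]
    nlinarith

theorem isTraversal_inner (hdormant : IsDormantBelow a i) (hawake : IsAwake a i) :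
    IsTraversal (update a (some (i, .outer)) (some (i, .low))) i (some (i, .inner))
      (some (i, .low)) := by
  obtain ⟨hlow, hhigh⟩ := hawake
  have hscale : (0 : ℝ) < 4 ^ (i : ℕ) := by positivity
  have hsource : update a (some (i, .outer)) (some (i, .low)) (some (i, .inner)) =
      some (i, .high) := by grind
  refine ⟨hdormant.update ⟨i, le_rfl, .high, (hhigh _).2 (by simp)⟩ ⟨i, le_rfl, .low, rfl⟩,
    ⟨i, le_rfl, .high, hsource⟩, ⟨i, le_rfl, .low, rfl⟩, ?_, ?_, ?_, ?_⟩
  · rw [position_inner]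
    linarith
  · rw [position_inner]
    linarith
  · rw [hsource, memberCost_eq_of_forall_iff (r := some (i, .anchor .high)) (by simp) (by grind),
      position_inner, position_high]
    nlinarith
  · rw [memberCost_eq_of_forall_iff_or (r := some (i, .anchor .low))
      (t := some (i, .outer)) (position_injective _) (by simp) (by simp) (by simp) (by grind),
      position_inner, position_low, position_outer]
    nlinarith

theorem improvingPath_settle_low (hi : IsTraversable i) (hdormant : IsDormantBelow a i)
    (hawake : IsAwake a i) :
    ImprovingPath position (2 ^ (i + 1 : ℕ)) a (settle a i .low) := by
  have h := (hi (isTraversal_outer hdormant hawake)).trans (hi (isTraversal_inner hdormant hawake))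
  rwa [← two_mul, ← pow_succ'] at h

theorem some_ne_of_position_lt (hy : position y < -15 * 4 ^ (i : ℕ)) (r : Role) :
    some (i, r) ≠ y := by
  rintro rfl
  have hscale : (0 : ℝ) < 4 ^ (i : ℕ) := by positivity
  rcases r with (_ | _) | _ | _ <;>
    simp only [position_low, position_high, position_outer, position_inner] at hy <;> linarith

theorem improvingPath_update_outer
    (hlow : ∀ q, a q = some (i, .low) ↔
      q = some (i, .anchor .low) ∨ q = some (i, .outer) ∨ q = some (i, .inner))
    (hhigh : ∀ q, a q = some (i, .high) ↔ q = some (i, .anchor .high) ∨ q = y)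
    (hlt : -63 * 4 ^ (i : ℕ) < position y) (hgt : position y < -19 * 4 ^ (i : ℕ)) :
    ImprovingPath position 1 a (update a (some (i, .outer)) (some (i, .high))) := by
  have hscale : (0 : ℝ) < 4 ^ (i : ℕ) := by positivity
  have hy := some_ne_of_position_lt (i := i) (y := y) (by linarith)
  have hinj := position_injective n
  refine improvingPath_update hinj ?_
  rw [(hlow _).2 (by simp),
    memberCost_eq_of_forall_iff_or hinj (hy (.anchor .high)) (by simp) (hy .outer).symm
      fun q _ => hhigh q,
    memberCost_eq_of_forall_iff_or (r := some (i, .anchor .low)) (t := some (i, .inner)) hinj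
      (by simp) (by simp) (by simp) (by grind),
    position_high, position_low, position_inner, position_outer]
  nlinarith

theorem improvingPath_update_high_update_low
    (hlow : ∀ q ≠ y, a q = some (i, .low) ↔ q = some (i, .anchor .low) ∨ q = some (i, .inner))
    (hhigh : ∀ q ≠ y, a q = some (i, .high) ↔ q = some (i, .anchor .high) ∨ q = some (i, .outer))
    (hgt : position y < -15 * 4 ^ (i : ℕ)) :
    ImprovingPath position 1 (update a y (some (i, .high))) (update a y (some (i, .low))) := by
  have hscale : (0 : ℝ) < 4 ^ (i : ℕ) := by positivity
  have hy := some_ne_of_position_lt hgt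
  have hinj := position_injective n
  refine improvingPath_update_update hinj ?_
  rw [memberCost_eq_of_forall_iff_or hinj (by simp) (hy _) (hy _) hlow,
    memberCost_eq_of_forall_iff_or hinj (by simp) (hy _) (hy _) hhigh,
    position_high, position_low, position_inner, position_outer]
  nlinarith

theorem improvingPath_update_inner
    (hlow : ∀ q, a q = some (i, .low) ↔
      q = some (i, .anchor .low) ∨ q = some (i, .inner) ∨ q = y)
    (hhigh : ∀ q, a q = some (i, .high) ↔ q = some (i, .anchor .high) ∨ q = some (i, .outer))
    (hgt : position y < -23 * 4 ^ (i : ℕ)) :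
    ImprovingPath position 1 a (update a (some (i, .inner)) (some (i, .high))) := by
  have hscale : (0 : ℝ) < 4 ^ (i : ℕ) := by positivity
  have hy := some_ne_of_position_lt (i := i) (y := y) (by linarith)
  have hinj := position_injective n
  refine improvingPath_update hinj ?_
  rw [(hlow _).2 (by simp),
    memberCost_eq_of_forall_iff_or hinj (by simp) (by simp) (by simp) fun q _ => hhigh q,
    memberCost_eq_of_forall_iff_or hinj (hy (.anchor .low)) (by simp) (hy .inner).symm (by grind),
    position_high, position_low, position_inner, position_outer]
  nlinarith

theorem improvingPath_settle_high (hasleep : IsAsleep a i)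
    (htarget : ∀ side, v ≠ some (i, side))
    (hlt : -63 * 4 ^ (i : ℕ) < position y) (hgt : position y < -23 * 4 ^ (i : ℕ))
    (henter : (position y - 11 * 4 ^ (i : ℕ)) ^ 2 / 2 < memberCost position a y (a y))
    (hexit : memberCost position a y v < (position y + 4 ^ (i : ℕ)) ^ 2 / 2) :
    ImprovingPath position 5 a (update (settle a i .high) y v) := by
  have hinj := position_injective n
  have hscale : (0 : ℝ) < 4 ^ (i : ℕ) := by positivity
  obtain ⟨hlow, hhigh⟩ := hasleep
  have hy := some_ne_of_position_lt (i := i) (y := y) (by linarith)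
  let b := update a (some (i, .outer)) (some (i, .high))
  have y_to_high : ImprovingPath position 1 a (update a y (some (i, .high))) := by
    refine improvingPath_update hinj ?_
    rwa [memberCost_eq_of_forall_iff (hy (.anchor .high)) (fun q _ => hhigh q), position_high]
  have outer_to_high : ImprovingPath position 1 (update a y (some (i, .high)))
      (update b y (some (i, .high))) := by
    rw [update_comm (hy .outer)]
    exact improvingPath_update_outer (y := y) (by grind) (by grind) hlt (by linarith)
  have y_to_low : ImprovingPath position 1 (update b y (some (i, .high)))
      (update b y (some (i, .low))) :=
    improvingPath_update_high_update_low (by grind) (by grind) (by linarith)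
  have inner_to_high : ImprovingPath position 1 (update b y (some (i, .low)))
      (update (settle a i .high) y (some (i, .low))) := by
    rw [settle, update_comm (hy .inner)]
    exact improvingPath_update_inner (y := y) (by grind) (by grind) hgt
  have y_to_v : ImprovingPath position 1 (update (settle a i .high) y (some (i, .low)))
      (update (settle a i .high) y v) := by
    refine improvingPath_update_update hinj ?_
    rw [memberCost_congr (b := a) (c := v) (by grind [settle_apply]),
      memberCost_eq_of_forall_iff (c := some (i, Side.low)) (hy (.anchor .low))
        (by grind [settle_apply]), position_low, sub_neg_eq_add]
    exact hexit
  exact (((y_to_high.trans outer_to_high).trans y_to_low).trans inner_to_high).trans y_to_v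

theorem IsAsleep.isAwake_update_settle_high (h : IsAsleep a i)
    (hsource : ∀ side, a y ≠ some (i, side)) (htarget : ∀ side, v ≠ some (i, side)) :
    IsAwake (update (settle a i .high) y v) i := by
  obtain ⟨hlow, hhigh⟩ := h
  constructor <;> grind [settle_apply]

theorem IsAsleep.settle_low_update_settle_high (h : IsAsleep a i)
    (hsource : ∀ side, a y ≠ some (i, side)) :
    settle (update (settle a i .high) y v) i .low = update a y v := by
  obtain ⟨hlow, -⟩ := h
  ext1 q
  grind [settle_apply]

theorem IsDormantBelow.settle {side : Side} (h : IsDormantBelow a i) (hasleep : IsAsleep a i) :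
    IsDormantBelow (settle a i side) i := by
  obtain ⟨hlow, -⟩ := hasleep
  have hlevel (s : Side) : IsFromLevel i (some (i, s)) := ⟨i, le_rfl, s, rfl⟩
  refine (h.update ?_ (hlevel side)).update ?_ (hlevel side)
  · rw [(hlow _).2 (by simp)]
    exact hlevel .low
  · rw [update_of_ne (by simp), (hlow _).2 (by simp)]
    exact hlevel .low

theorem IsFromLevel.settle_apply {j : Fin n} {side : Side} (h : IsFromLevel i (a y))
    (hj : i ≤ j) : IsFromLevel i (settle a j side y) := by
  rw [HartiganWong.settle_apply]
  split_ifs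
  exacts [⟨j, hj, side, rfl⟩, h]

theorem IsFromLevel.ne_of_lt {c : Cluster n} {j : Fin n} (h : IsFromLevel i c) (hj : j < i)
    (side : Side) : c ≠ some (j, side) := by
  obtain ⟨k, hk, s, rfl⟩ := h
  grind

theorem IsFromLevel.mono {c : Cluster n} {j : Fin n} (h : IsFromLevel i c) (hj : j ≤ i) :
    IsFromLevel j c :=
  h.imp fun _ hk => ⟨hj.trans hk.1, hk.2⟩

theorem IsDormantBelow.mono {j : Fin n} (h : IsDormantBelow a i) (hj : j ≤ i) :
    IsDormantBelow a j :=
  ⟨h.1, fun _ hk => h.2 _ (hk.trans_le hj)⟩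

theorem IsTraversable.succ {i : Fin n} (hi : IsTraversable i.castSucc) : IsTraversable i.succ := by
  rintro a y v ⟨hdormant, hsource, htarget, hlt, hgt, hsrc, htgt⟩
  have hscale : (4 : ℝ) ^ (i.succ : ℕ) = 4 * 4 ^ (i.castSucc : ℕ) := pow_succ' 4 (i : ℕ)
  rw [hscale] at hlt hgt hsrc htgt
  have hlevel := i.castSucc_lt_succ
  have hasleep := hdormant.2 _ hlevel
  have hwake : ImprovingPath position 5 a (update (settle a i.castSucc .high) y v) :=
    improvingPath_settle_high hasleep (htarget.ne_of_lt hlevel)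
      (by linarith) (by linarith) (by convert hsrc using 3; ring) (by convert htgt using 3; ring)
  have hdormant' : IsDormantBelow (update (settle a i.castSucc .high) y v) i.castSucc :=
    ((hdormant.mono hlevel.le).settle hasleep).update
      ((hsource.mono hlevel.le).settle_apply le_rfl) (htarget.mono hlevel.le)
  have hsettle := improvingPath_settle_low hi hdormant'
    (hasleep.isAwake_update_settle_high (hsource.ne_of_lt hlevel) (htarget.ne_of_lt hlevel))
  rw [hasleep.settle_low_update_settle_high (hsource.ne_of_lt hlevel)] at hsettle
  exact (hwake.trans hsettle).mono (by simp)

theorem isTraversable (i : Fin (n + 1)) : IsTraversable i :=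
  Fin.induction isTraversable_zero (fun _ => IsTraversable.succ) i

end Gadget

/-! ### The initial assignment -/

section InitialAssignment

variable (n : ℕ)

/-- The initial assignment of the instance with `n + 1` gadgets: only the topmost gadget is
awake. -/
def initialAssignment : Point (n + 1) → Cluster (n + 1)
  | none => none
  | some (i, .anchor side) => some (i, side)
  | some (i, .outer) | some (i, .inner) => some (i, if i = Fin.last n then .high else .low)

theorem initialAssignment_surjective : Surjective (initialAssignment n)
  | none => ⟨none, rfl⟩
  | some (i, side) => ⟨some (i, .anchor side), rfl⟩

theorem isAwake_initialAssignment : IsAwake (initialAssignment n) (Fin.last n) := by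
  constructor <;> rintro (_ | ⟨i, _ | _ | _⟩) <;> grind [initialAssignment]

theorem isDormantBelow_initialAssignment :
    IsDormantBelow (initialAssignment n) (Fin.last n) := by
  refine ⟨?_, fun j hj => ⟨?_, ?_⟩⟩ <;> rintro (_ | ⟨i, _ | _ | _⟩) <;>
    grind [initialAssignment]

end InitialAssignment

end HartiganWong

open HartiganWong

/-- For every `m ≥ 2` there is an instance of `k`-means on the line with
`n = 4m − 3` points and `k = 2m − 1` clusters, an initial partition into `k` nonempty
clusters, and an improving sequence of at least `2^(m−1)` single-point reassignments, each of
which strictly decreases the `k`-means potential `Φ`. Hence the Hartigan--Wong method can take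
`2^(Ω(n))` iterations on the line. -/
theorem hartigan_wong_exponential_lower_bound :
    ∀ m : ℕ, 2 ≤ m →
      ∃ (X : Finset ℝ), X.card = 4 * m - 3 ∧
        ∃ (N : ℕ), 2 ^ (m - 1) ≤ N ∧
          ∃ seq : ℕ → Fin (2 * m - 1) → Finset ℝ,
            (∀ t ≤ N, IsPartitionOf X (seq t)) ∧
            (∀ i : Fin (2 * m - 1), (seq 0 i).Nonempty) ∧
            (∀ t < N, IsSinglePointMove (seq t) (seq (t + 1)) ∧
              (∑ i : Fin (2 * m - 1), pot1 (seq (t + 1) i))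
                < ∑ i : Fin (2 * m - 1), pot1 (seq t i)) := by
  intro m hm
  obtain ⟨n, rfl⟩ := Nat.exists_eq_add_of_le' hm
  have hpath := improvingPath_settle_low (isTraversable (Fin.last n))
    (isDormantBelow_initialAssignment n) (isAwake_initialAssignment n)
  refine ⟨Finset.univ.image (position (n := n + 1)), ?_, ?_⟩
  · rw [Finset.card_image_of_injective _ (position_injective _), Finset.card_univ, card_point]
    omega
  · have hcard : Fintype.card (Cluster (n + 1)) = 2 * (n + 2) - 1 := card_cluster (n + 1)
    exact hpath.exists_seq (position_injective _) (initialAssignment_surjective n)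
      (Fintype.equivFinOfCardEq hcard).symm
end

section
/- Let n, k, d ∈ ℕ with 4kd ≤ n, and fix a set Y of n points in [0,1]^d. Perturb each point of Y independently by a d-dimensional Gaussian random vector with mean 0 and standard deviation σ ≤ 1, obtaining a random point set X. Define T(X) to be the maximum length of any sequence of partitions of X into k clusters in which consecutive partitions differ by reassigning a single point and each reassignment strictly decreases the k-means potential Φ. Then the expectation of T(X) is at most O(k^(12kd+5) · d^12 · n^(12.5 + 1/d) · ln^4.5(nkd) / σ^4) = k^(12kd) · poly(n, k, d, 1/σ). -/
open MeasureTheory ProbabilityTheory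

noncomputable section

/-- The identification of `Fin d → ℝ` with `EuclideanSpace ℝ (Fin d)`. -/
def toEuc {d : ℕ} (x : Fin d → ℝ) : EuclideanSpace ℝ (Fin d) :=
  (WithLp.equiv 2 (Fin d → ℝ)).symm x

/-- The indices of the points assigned to cluster `i` by the labeling `cl`. -/
def clusterIdx {n k : ℕ} (cl : Fin n → Fin k) (i : Fin k) : Finset (Fin n) :=
  Finset.univ.filter fun j => cl j = i

/-- The center of mass of cluster `i` of the point set `X` under the labeling `cl`. -/
def clusterCtr {n k d : ℕ} (X : Fin n → EuclideanSpace ℝ (Fin d)) (cl : Fin n → Fin k)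
    (i : Fin k) : EuclideanSpace ℝ (Fin d) :=
  ((clusterIdx cl i).card : ℝ)⁻¹ • ∑ j ∈ clusterIdx cl i, X j

/-- The `k`-means potential `Φ` of the point set `X` partitioned according to `cl`. -/
def kmeansPot {n k d : ℕ} (X : Fin n → EuclideanSpace ℝ (Fin d)) (cl : Fin n → Fin k) : ℝ :=
  ∑ i : Fin k, ∑ j ∈ clusterIdx cl i, ‖X j - clusterCtr X cl i‖ ^ 2

/-- `cl'` is obtained from `cl` by reassigning a single point to a different cluster. -/
def SingleMove {n k : ℕ} (cl cl' : Fin n → Fin k) : Prop :=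
  ∃ j : Fin n, cl' j ≠ cl j ∧ ∀ j' : Fin n, j' ≠ j → cl' j' = cl j'

/-- `T(X)`: the maximum length of a sequence of partitions of `X` into `k` clusters in which
consecutive partitions differ by reassigning a single point and each reassignment strictly
decreases the `k`-means potential `Φ`. -/
def maxImprovingSeqLen (n k d : ℕ) (X : Fin n → EuclideanSpace ℝ (Fin d)) : ℕ :=
  sSup {L : ℕ | ∃ seq : ℕ → Fin n → Fin k,
    ∀ t < L, SingleMove (seq t) (seq (t + 1)) ∧
      kmeansPot X (seq (t + 1)) < kmeansPot X (seq t)}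

/-- The distribution of `n` points, the `i`-th obtained by perturbing `Y i ∈ [0,1]^d` by an
independent `d`-dimensional Gaussian of mean `0` and standard deviation `σ`. -/
def perturbedPoints (n d : ℕ) (Y : Fin n → Fin d → ℝ) (σ : ℝ) :
    Measure (Fin n → Fin d → ℝ) :=
  Measure.pi fun i => Measure.pi fun j => gaussianReal (Y i j) ((σ ^ 2).toNNReal)

end

/-!
Any `k ^ m` consecutive improving moves visit `k ^ m + 1` different labelings, so they involve at
least `m` different points; we take `m = 4 * k * d`. If such a window lowers the potential by at
most `ε`, then so does the first move of each of these points. The gain of a first move is a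
quadratic polynomial in the moved point with leading coefficient at least `1 / n`, whose other
coefficients depend only on the points that moved before and on the initial cluster sums. Once
the cluster sums are replaced by points of a finite net, which costs a factor `ε ^ (-k * d)` in a
union bound, exposing the moving points in the order of their first moves yields a factor
`√(ε * n) / σ` for each of them, up to a constant. Altogether such a window exists with probability
at most `(Λ * ε) ^ (k * d)`.

If no such window exists and all points have norm at most `R`, then the potential is at most
`n * R ^ 2` and `T ≤ k ^ m * (1 + n * R ^ 2 / ε)`. Summing over dyadic values of `ε` bounds the
expectation, since `k * d ≥ 2` in the only interesting case `k ≥ 2`. A point leaves the ball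
of radius `R` so rarely that the trivial bound `T < k ^ n` suffices there.
-/

namespace HartiganWong

section ProductMeasure

variable {ι : Type*} [Fintype ι] [DecidableEq ι] {α : ι → Type*} [∀ i, MeasurableSpace (α i)]
  (μ : ∀ i, Measure (α i)) [∀ i, IsProbabilityMeasure (μ i)]

lemma pi_inter_le_mul (a : ι) {B E : Set (∀ i, α i)} (hB : MeasurableSet B)
    (hE : MeasurableSet E) (hBa : ∀ ω x, Function.update ω a x ∈ B ↔ ω ∈ B) {q : ENNReal}
    (hq : ∀ ω, μ a {x | Function.update ω a x ∈ E} ≤ q) :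
    Measure.pi μ (B ∩ E) ≤ Measure.pi μ B * q := by
  rw [← lintegral_indicator_one (hB.inter hE), mul_comm, ← lintegral_indicator_const hB]
  refine lintegral_le_of_lmarginal_le {a}
    (measurable_one.indicator (hB.inter hE)) (measurable_const.indicator hB) fun ω ↦ ?_
  rw [lmarginal_singleton, lmarginal_singleton]
  by_cases hω : ω ∈ B
  · have hE' : MeasurableSet {x | Function.update ω a x ∈ E} := hE.preimage (measurable_update ω)
    calc ∫⁻ x, (B ∩ E).indicator 1 (Function.update ω a x) ∂μ a
        = μ a {x | Function.update ω a x ∈ E} := by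
          rw [← lintegral_indicator_one hE']
          refine lintegral_congr fun x ↦ ?_
          by_cases hx : Function.update ω a x ∈ E <;> simp [Set.indicator, hBa, hω, hx]
      _ ≤ ∫⁻ x, B.indicator (fun _ ↦ q) (Function.update ω a x) ∂μ a := by
          simpa [Set.indicator, hBa, hω] using hq ω
  · simp [Set.indicator, hBa, hω]

lemma pi_le_of_forall_update_le (a : ι) {E : Set (∀ i, α i)} (hE : MeasurableSet E) {q : ENNReal}
    (hq : ∀ ω, μ a {x | Function.update ω a x ∈ E} ≤ q) :
    Measure.pi μ E ≤ q := by
  simpa using pi_inter_le_mul μ a MeasurableSet.univ hE (by simp) hq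

lemma pi_iInter_le_prod {m : ℕ} (a : Fin m → ι) {E : Fin m → Set (∀ i, α i)}
    (hE : ∀ j, MeasurableSet (E j))
    (hEa : ∀ j l, j < l → ∀ ω x, Function.update ω (a l) x ∈ E j ↔ ω ∈ E j)
    {q : Fin m → ENNReal} (hq : ∀ j ω, μ (a j) {x | Function.update ω (a j) x ∈ E j} ≤ q j) :
    Measure.pi μ (⋂ j, E j) ≤ ∏ j, q j := by
  induction m with
  | zero => simp
  | succ m ih =>
    have hsplit : ⋂ j, E j = (⋂ j : Fin m, E j.castSucc) ∩ E (Fin.last m) := by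
      ext ω
      simp [Fin.forall_fin_succ']
    rw [hsplit, Fin.prod_univ_castSucc]
    calc Measure.pi μ ((⋂ j : Fin m, E j.castSucc) ∩ E (Fin.last m))
        ≤ Measure.pi μ (⋂ j : Fin m, E j.castSucc) * q (Fin.last m) := by
          refine pi_inter_le_mul μ (a (Fin.last m)) (.iInter fun j ↦ hE _) (hE _)
            (fun ω x ↦ ?_) (hq _)
          simp only [Set.mem_iInter]
          exact forall_congr' fun j ↦ hEa _ _ j.castSucc_lt_last ω x
      _ ≤ (∏ j : Fin m, q j.castSucc) * q (Fin.last m) := by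
          gcongr
          exact ih (fun j ↦ a j.castSucc) (fun j ↦ hE _)
            (fun j l hjl ↦ hEa _ _ (by simpa using hjl)) (fun j ↦ hq _)

end ProductMeasure

section LayeredExpectation

variable {Ω : Type*}

lemma le_add_tsum_indicator {f : Ω → ENNReal} {E : ℕ → Set Ω} {c : ℕ → ENNReal}
    (hfE : ∀ l, ∀ ω ∉ E l, f ω ≤ c l) {ω : Ω} (hfc : ∃ l, f ω ≤ c l) :
    f ω ≤ c 0 + ∑' l, (E l).indicator (fun _ ↦ c (l + 1)) ω := by
  classical
  rcases hl : Nat.find hfc with _ | l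
  · exact le_add_right (hl ▸ Nat.find_spec hfc)
  · have hlt : c l < f ω := not_le.1 (Nat.find_min hfc (hl ▸ l.lt_succ_self))
    have hmem : ω ∈ E l := by
      by_contra hω
      exact hlt.not_ge (hfE l ω hω)
    calc f ω ≤ c (l + 1) := hl ▸ Nat.find_spec hfc
      _ = (E l).indicator (fun _ ↦ c (l + 1)) ω := by rw [Set.indicator_of_mem hmem]
      _ ≤ ∑' l, (E l).indicator (fun _ ↦ c (l + 1)) ω := ENNReal.le_tsum l
      _ ≤ _ := le_add_self

variable [MeasurableSpace Ω] {μ : Measure Ω} [IsProbabilityMeasure μ]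

lemma lintegral_le_add_tsum {f : Ω → ENNReal} {E : ℕ → Set Ω}
    (hE : ∀ l, MeasurableSet (E l)) {c : ℕ → ENNReal} (hfE : ∀ l, ∀ ω ∉ E l, f ω ≤ c l)
    (hfc : ∀ ω, ∃ l, f ω ≤ c l) :
    ∫⁻ ω, f ω ∂μ ≤ c 0 + ∑' l, c (l + 1) * μ (E l) := by
  refine (lintegral_mono fun ω ↦ le_add_tsum_indicator hfE (hfc ω)).trans_eq ?_
  rw [lintegral_add_left measurable_const, lintegral_const, measure_univ, mul_one,
    lintegral_tsum fun l ↦ (measurable_const.indicator (hE l)).aemeasurable]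
  simp only [lintegral_indicator_const (hE _)]

lemma lintegral_le_of_dyadic {f : Ω → ENNReal} {E : ℕ → Set Ω}
    (hE : ∀ l, MeasurableSet (E l)) {c : ENNReal} (hc : c ≠ 0)
    (hf : ∀ ω, f ω ≠ ⊤) (hfE : ∀ l, ∀ ω ∉ E l, f ω ≤ c * 2 ^ l)
    (hμE : ∀ l, μ (E l) ≤ 4⁻¹ ^ l) :
    ∫⁻ ω, f ω ∂μ ≤ 5 * c := by
  have hfc (ω : Ω) : ∃ l, f ω ≤ c * 2 ^ l := by
    have htop : Filter.Tendsto (fun l : ℕ ↦ c * (2 : ENNReal) ^ l) Filter.atTop (nhds ⊤) := by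
      have h := ENNReal.Tendsto.const_mul (a := c)
        (ENNReal.tendsto_pow_atTop_nhds_top_iff.2 ENNReal.one_lt_two) (.inl ENNReal.top_ne_zero)
      rwa [ENNReal.mul_top hc] at h
    exact (htop.eventually_const_le (lt_top_iff_ne_top.2 (hf ω))).exists
  have hterm (l : ℕ) : c * 2 ^ (l + 1) * μ (E l) ≤ 2 * c * 2⁻¹ ^ l := by
    have h4 : (2 : ENNReal) * 4⁻¹ = 2⁻¹ := by
      rw [show (4 : ENNReal) = 2 * 2 by norm_num, ENNReal.mul_inv (by simp) (by simp), ← mul_assoc,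
        ENNReal.mul_inv_cancel (by simp) (by simp), one_mul]
    calc c * 2 ^ (l + 1) * μ (E l) ≤ c * 2 ^ (l + 1) * 4⁻¹ ^ l := by gcongr; exact hμE l
      _ = 2 * c * (2 * 4⁻¹) ^ l := by ring
      _ = 2 * c * 2⁻¹ ^ l := by rw [h4]
  calc ∫⁻ ω, f ω ∂μ ≤ c * 2 ^ 0 + ∑' l, c * 2 ^ (l + 1) * μ (E l) :=
        lintegral_le_add_tsum hE hfE hfc
    _ ≤ c * 2 ^ 0 + ∑' l : ℕ, 2 * c * 2⁻¹ ^ l :=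
        add_le_add le_rfl (ENNReal.tsum_le_tsum hterm)
    _ = 5 * c := by
        rw [ENNReal.tsum_mul_left, ENNReal.tsum_geometric_two]
        ring

end LayeredExpectation

section Gaussian

open Real

lemma gaussianReal_le_mul_volume (μ : ℝ) {v : NNReal} (hv : v ≠ 0) (A : Set ℝ) :
    gaussianReal μ v A ≤ ENNReal.ofReal (√(2 * π * v))⁻¹ * volume A := by
  have hpdf (x : ℝ) : gaussianPDF μ v x ≤ ENNReal.ofReal (√(2 * π * v))⁻¹ := by
    refine ENNReal.ofReal_le_ofReal (mul_le_of_le_one_right (by positivity) ?_)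
    exact exp_le_one_iff.2 (div_nonpos_of_nonpos_of_nonneg (by nlinarith) (by positivity))
  rw [gaussianReal_apply _ hv]
  exact (lintegral_mono hpdf).trans_eq (setLIntegral_const _ _)

lemma sqrt_add_le_sqrt_add_sqrt (x y : ℝ) : √(x + y) ≤ √x + √y := by
  refine sqrt_le_iff.2 ⟨by positivity, ?_⟩
  have hx : x ≤ √x ^ 2 := (le_max_left x 0).trans_eq sq_sqrt'.symm
  have hy : y ≤ √y ^ 2 := (le_max_left y 0).trans_eq sq_sqrt'.symm
  nlinarith [mul_nonneg (sqrt_nonneg x) (sqrt_nonneg y)]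

lemma exists_abs_sub_mem_Icc_of_abs_quadratic_le {κ : ℝ} (hκ : 0 < κ) (β γ η : ℝ) :
    ∃ p a : ℝ, ∀ y, |κ * y ^ 2 + β * y + γ| ≤ η → |y - p| ∈ Set.Icc a (a + √(2 * η / κ)) := by
  set p := -β / (2 * κ)
  set s := β ^ 2 / (4 * κ) - γ
  have hsquare (y : ℝ) : κ * y ^ 2 + β * y + γ = κ * (y - p) ^ 2 - s := by
    simp only [p, s]
    field_simp
    ring
  refine ⟨p, √((s - η) / κ), fun y hy ↦ ?_⟩
  rw [hsquare, abs_le] at hy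
  have hlower : (s - η) / κ ≤ (y - p) ^ 2 := by rw [div_le_iff₀ hκ]; linarith
  have hupper : (y - p) ^ 2 ≤ (s - η) / κ + 2 * η / κ := by
    rw [← add_div, le_div_iff₀ hκ]; linarith
  rw [← sqrt_sq_eq_abs]
  exact ⟨sqrt_le_sqrt hlower, (sqrt_le_sqrt hupper).trans (sqrt_add_le_sqrt_add_sqrt _ _)⟩

lemma volume_abs_sub_mem_Icc_le (p a : ℝ) {w : ℝ} (hw : 0 ≤ w) :
    volume {y : ℝ | |y - p| ∈ Set.Icc a (a + w)} ≤ ENNReal.ofReal (2 * w) := by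
  have hsub : {y : ℝ | |y - p| ∈ Set.Icc a (a + w)} ⊆
      Set.Icc (p - a - w) (p - a) ∪ Set.Icc (p + a) (p + a + w) := by
    rintro y ⟨hlower, hupper⟩
    rcases abs_cases (y - p) with ⟨habs, -⟩ | ⟨habs, -⟩ <;> rw [habs] at hlower hupper
    · exact .inr ⟨by linarith, by linarith⟩
    · exact .inl ⟨by linarith, by linarith⟩
  calc volume {y : ℝ | |y - p| ∈ Set.Icc a (a + w)}
      ≤ volume (Set.Icc (p - a - w) (p - a)) + volume (Set.Icc (p + a) (p + a + w)) :=
        (measure_mono hsub).trans (measure_union_le _ _)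
    _ = ENNReal.ofReal (2 * w) := by
        rw [Real.volume_Icc, Real.volume_Icc, ← ENNReal.ofReal_add (by linarith) (by linarith)]
        ring_nf

lemma gaussianReal_abs_quadratic_le (μ : ℝ) {v : NNReal} (hv : v ≠ 0) {κ : ℝ} (hκ : 0 < κ)
    (β γ η : ℝ) :
    gaussianReal μ v {y | |κ * y ^ 2 + β * y + γ| ≤ η} ≤
      ENNReal.ofReal (2 * √(η / (π * κ * v))) := by
  have : (0 : ℝ) < v := NNReal.coe_pos.2 (pos_iff_ne_zero.2 hv)
  obtain ⟨p, a, hpa⟩ := exists_abs_sub_mem_Icc_of_abs_quadratic_le hκ β γ η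
  calc gaussianReal μ v {y | |κ * y ^ 2 + β * y + γ| ≤ η}
      ≤ ENNReal.ofReal (√(2 * π * v))⁻¹ * ENNReal.ofReal (2 * √(2 * η / κ)) :=
        (gaussianReal_le_mul_volume μ hv _).trans <| by
          gcongr
          exact (measure_mono hpa).trans (volume_abs_sub_mem_Icc_le p a (sqrt_nonneg _))
    _ = ENNReal.ofReal (2 * √(η / (π * κ * v))) := by
        rw [← ENNReal.ofReal_mul (by positivity), ← sqrt_inv, mul_left_comm,
          ← sqrt_mul (by positivity)]
        congr 3
        field_simp

lemma hasSubgaussianMGF_sub_gaussianReal (μ : ℝ) (v : NNReal) :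
    HasSubgaussianMGF (fun x ↦ x - μ) v (gaussianReal μ v) where
  integrable_exp_mul t := by
    simpa [mul_sub, exp_sub] using
      (integrable_exp_mul_gaussianReal (μ := μ) (v := v) t).div_const (exp (t * μ))
  mgf_le t := by
    rw [show (fun x : ℝ ↦ x - μ) = fun x ↦ x + -μ from rfl, mgf_add_const, mgf_fun_id_gaussianReal,
      ← exp_add]
    exact exp_le_exp.2 (by linarith)

lemma gaussianReal_abs_add_lt_abs_le (μ : ℝ) (v : NNReal) {s : ℝ} (hs : 0 ≤ s) :
    gaussianReal μ v {y | |μ| + s < |y|} ≤ ENNReal.ofReal (2 * exp (-s ^ 2 / (2 * v))) := by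
  have hsub : {y | |μ| + s < |y|} ⊆ {y | s ≤ y - μ} ∪ {y | s ≤ -(y - μ)} := fun y hy ↦ by
    simp only [Set.mem_ofPred_eq, Set.mem_union] at hy ⊢
    exact le_abs.1 (by linarith [abs_sub_abs_le_abs_sub y μ])
  have hsubgaussian := hasSubgaussianMGF_sub_gaussianReal μ v
  rw [← ofReal_measureReal]
  refine ENNReal.ofReal_le_ofReal ?_
  calc (gaussianReal μ v).real {y | |μ| + s < |y|}
      ≤ (gaussianReal μ v).real {y | s ≤ y - μ} + (gaussianReal μ v).real {y | s ≤ -(y - μ)} :=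
        (measureReal_mono hsub).trans (measureReal_union_le _ _)
    _ ≤ exp (-s ^ 2 / (2 * v)) + exp (-s ^ 2 / (2 * v)) :=
        add_le_add (hsubgaussian.measure_ge_le hs) (hsubgaussian.neg.measure_ge_le hs)
    _ = 2 * exp (-s ^ 2 / (2 * v)) := (two_mul _).symm

lemma continuous_toEuc {d : ℕ} : Continuous (toEuc : (Fin d → ℝ) → EuclideanSpace ℝ (Fin d)) :=
  PiLp.continuous_toLp 2 _

lemma toEuc_update {d : ℕ} (x : Fin d → ℝ) (c : Fin d) (y : ℝ) :
    toEuc (Function.update x c y) =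
      toEuc (Function.update x c 0) + EuclideanSpace.single c y := by
  ext t
  rcases eq_or_ne t c with rfl | ht <;> simp [toEuc, *]

lemma pi_gaussianReal_abs_quadratic_le {d : ℕ} (hd : 0 < d) (μ : Fin d → ℝ) {v : NNReal}
    (hv : v ≠ 0) {κ : ℝ} (hκ : 0 < κ) (w : EuclideanSpace ℝ (Fin d)) (γ η : ℝ) :
    Measure.pi (fun t ↦ gaussianReal (μ t) v)
        {x | |κ * ‖toEuc x‖ ^ 2 + inner ℝ w (toEuc x) + γ| ≤ η} ≤
      ENNReal.ofReal (2 * √(η / (π * κ * v))) := by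
  have hcont := continuous_toEuc (d := d)
  refine pi_le_of_forall_update_le _ (⟨0, hd⟩ : Fin d)
    (measurableSet_le (by fun_prop) measurable_const) fun x ↦ ?_
  set c : Fin d := ⟨0, hd⟩
  set u := toEuc (Function.update x c 0)
  have hquadratic (y : ℝ) :
      κ * ‖toEuc (Function.update x c y)‖ ^ 2 + inner ℝ w (toEuc (Function.update x c y)) + γ =
        κ * y ^ 2 + (2 * κ * u c + w c) * y + (κ * ‖u‖ ^ 2 + inner ℝ w u + γ) := by
    rw [toEuc_update, norm_add_sq_real, inner_add_right, EuclideanSpace.inner_single_right,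
      EuclideanSpace.inner_single_right, PiLp.norm_single]
    simp only [conj_trivial, norm_eq_abs, sq_abs]
    ring
  simp only [Set.mem_ofPred_eq, hquadratic]
  exact gaussianReal_abs_quadratic_le _ hv hκ _ _ _

end Gaussian

noncomputable section

variable {n k d : ℕ}

section ClusterSums

variable {M : Type*} [AddCommGroup M]

/-- The sum of the members of cluster `i` of the family `X` under the labeling `cl`. -/
def clusterSum (X : Fin n → M) (cl : Fin n → Fin k) (i : Fin k) : M :=
  ∑ j ∈ clusterIdx cl i, X j

/-- The number of members of cluster `i` under the labeling `cl`. It is an integer, so that it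
changes by the same formula `moveShift` as the cluster sums when points are relabeled. -/
def clusterSize (cl : Fin n → Fin k) (i : Fin k) : ℤ :=
  (clusterIdx cl i).card

/-- The change of the `i`-th cluster sum when the members `x l` move from cluster `p l` to
cluster `g l`. -/
def moveShift {ι : Type*} [Fintype ι] (p g : ι → Fin k) (x : ι → M) (i : Fin k) : M :=
  ∑ l, ((Pi.single (g l) (x l) : Fin k → M) i - (Pi.single (p l) (x l) : Fin k → M) i)

/-- The labeling `cl'` arises from `cl` by moving the point `j` to another cluster. -/
def Reassigns (j : Fin n) (cl cl' : Fin n → Fin k) : Prop :=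
  cl' j ≠ cl j ∧ ∀ j' : Fin n, j' ≠ j → cl' j' = cl j'

lemma clusterSum_one (cl : Fin n → Fin k) (i : Fin k) :
    clusterSum (fun _ ↦ (1 : ℤ)) cl i = clusterSize cl i := by
  simp [clusterSum, clusterSize]

lemma clusterSum_eq_sum_single (X : Fin n → M) (cl : Fin n → Fin k) (i : Fin k) :
    clusterSum X cl i = ∑ j, (Pi.single (cl j) (X j) : Fin k → M) i := by
  simp [clusterSum, clusterIdx, Finset.sum_filter, Pi.single_apply, eq_comm]

lemma clusterSum_eq_add_moveShift {ι : Type*} [Fintype ι] {a : ι → Fin n}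
    (ha : Function.Injective a) {cl cl' : Fin n → Fin k}
    (hcl : ∀ q ∉ Set.range a, cl' q = cl q) (X : Fin n → M) (i : Fin k) :
    clusterSum X cl' i = clusterSum X cl i + moveShift (cl ∘ a) (cl' ∘ a) (X ∘ a) i := by
  rw [clusterSum_eq_sum_single, clusterSum_eq_sum_single, ← sub_eq_iff_eq_add',
    ← Finset.sum_sub_distrib]
  exact (Fintype.sum_of_injective a ha _ _ (fun q hq ↦ by simp [hcl q hq]) fun _ ↦ rfl).symm

namespace Reassigns

variable {j : Fin n} {cl cl' : Fin n → Fin k}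

lemma clusterSum_eq (h : Reassigns j cl cl') (X : Fin n → M) (i : Fin k) :
    clusterSum X cl' i = clusterSum X cl i +
      ((Pi.single (cl' j) (X j) : Fin k → M) i - (Pi.single (cl j) (X j) : Fin k → M) i) := by
  have hcl : ∀ q ∉ Set.range fun _ : Unit ↦ j, cl' q = cl q := fun q hq ↦
    h.2 q fun hqj ↦ hq ⟨(), hqj.symm⟩
  simpa [moveShift] using
    clusterSum_eq_add_moveShift (Function.injective_of_subsingleton _) hcl X i

lemma clusterSum_source (h : Reassigns j cl cl') (X : Fin n → M) :
    clusterSum X cl' (cl j) = clusterSum X cl (cl j) - X j := by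
  rw [h.clusterSum_eq, Pi.single_eq_same, Pi.single_eq_of_ne h.1.symm, zero_sub, sub_eq_add_neg]

lemma clusterSum_target (h : Reassigns j cl cl') (X : Fin n → M) :
    clusterSum X cl' (cl' j) = clusterSum X cl (cl' j) + X j := by
  rw [h.clusterSum_eq, Pi.single_eq_same, Pi.single_eq_of_ne h.1, sub_zero]

lemma clusterSum_of_ne (h : Reassigns j cl cl') (X : Fin n → M) {i : Fin k} (hi : i ≠ cl j)
    (hi' : i ≠ cl' j) : clusterSum X cl' i = clusterSum X cl i := by
  rw [h.clusterSum_eq, Pi.single_eq_of_ne hi, Pi.single_eq_of_ne hi', sub_zero, add_zero]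

lemma clusterSize_source (h : Reassigns j cl cl') :
    clusterSize cl' (cl j) = clusterSize cl (cl j) - 1 := by
  simpa only [clusterSum_one] using h.clusterSum_source fun _ ↦ (1 : ℤ)

lemma clusterSize_target (h : Reassigns j cl cl') :
    clusterSize cl' (cl' j) = clusterSize cl (cl' j) + 1 := by
  simpa only [clusterSum_one] using h.clusterSum_target fun _ ↦ (1 : ℤ)

end Reassigns

lemma clusterSize_nonneg (cl : Fin n → Fin k) (i : Fin k) : 0 ≤ clusterSize cl i :=
  Int.natCast_nonneg _

lemma clusterSize_le (cl : Fin n → Fin k) (i : Fin k) : clusterSize cl i ≤ n := by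
  simpa [clusterSize] using (clusterIdx cl i).card_le_univ

lemma norm_clusterSum_le {E : Type*} [SeminormedAddCommGroup E] {X : Fin n → E} {R : ℝ}
    (hX : ∀ j, ‖X j‖ ≤ R) (cl : Fin n → Fin k) (i : Fin k) :
    ‖clusterSum X cl i‖ ≤ clusterSize cl i * R := by
  simpa [clusterSum, clusterSize] using norm_sum_le_of_le (clusterIdx cl i) fun j _ ↦ hX j

end ClusterSums

section Energy

variable {E : Type*} [SeminormedAddCommGroup E]

/-- The share `‖S‖² / m` of a cluster with `m` members of sum `S` in the difference between
`∑ j, ‖X j‖ ^ 2` and the `k`-means potential; an empty cluster contributes `0`. -/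
def clusterEnergy (m : ℤ) (S : E) : ℝ :=
  (m : ℝ)⁻¹ * ‖S‖ ^ 2

/-- The decrease of the `k`-means potential when a point `x` moves from a cluster with `m` members
of sum `S` to a cluster with `m'` members of sum `S'`. -/
def moveGain (m m' : ℤ) (S S' x : E) : ℝ :=
  clusterEnergy (m - 1) (S - x) + clusterEnergy (m' + 1) (S' + x)
    - clusterEnergy m S - clusterEnergy m' S'

lemma clusterEnergy_nonneg {m : ℤ} (hm : 0 ≤ m) (S : E) : 0 ≤ clusterEnergy m S := by
  have : (0 : ℝ) ≤ m := mod_cast hm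
  unfold clusterEnergy
  positivity

lemma continuous_moveGain {T : Type*} [TopologicalSpace T] (m m' : ℤ) {S S' x : T → E}
    (hS : Continuous S) (hS' : Continuous S') (hx : Continuous x) :
    Continuous fun t ↦ moveGain m m' (S t) (S' t) (x t) := by
  unfold moveGain clusterEnergy
  fun_prop

lemma abs_clusterEnergy_sub_le {m : ℤ} (hm : 0 ≤ m) {S T : E} {R δ : ℝ} (hS : ‖S‖ ≤ m * R)
    (hST : ‖S - T‖ ≤ δ) (hδ : δ ≤ R) :
    |clusterEnergy m S - clusterEnergy m T| ≤ 3 * δ * R := by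
  have hδ₀ : 0 ≤ δ := (norm_nonneg _).trans hST
  rcases hm.eq_or_lt with rfl | hm
  · have hR : 0 ≤ R := hδ₀.trans hδ
    simp only [clusterEnergy, Int.cast_zero, inv_zero, zero_mul, sub_zero, abs_zero]
    positivity
  have hm₁ : (1 : ℝ) ≤ m := mod_cast hm
  have hsum : ‖S‖ + ‖T‖ ≤ 3 * (m * R) := by
    have hT : ‖T‖ ≤ ‖S‖ + ‖S - T‖ := by linarith [norm_sub_norm_le T S, norm_sub_rev S T]
    nlinarith
  have hsq : |‖S‖ ^ 2 - ‖T‖ ^ 2| ≤ 3 * (m * R) * δ := by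
    rw [sq_sub_sq, abs_mul, abs_of_nonneg (by positivity : 0 ≤ ‖S‖ + ‖T‖)]
    exact mul_le_mul hsum ((abs_norm_sub_norm_le S T).trans hST) (abs_nonneg _)
      ((by positivity : 0 ≤ ‖S‖ + ‖T‖).trans hsum)
  rw [clusterEnergy, clusterEnergy, ← mul_sub, abs_mul, abs_of_pos (by positivity),
    inv_mul_le_iff₀ (by positivity)]
  linarith

lemma abs_moveGain_sub_le {m m' : ℤ} (hm : 1 ≤ m) (hm' : 0 ≤ m') {S S' T T' x : E} {R δ : ℝ}
    (hS : ‖S‖ ≤ m * R) (hS' : ‖S'‖ ≤ m' * R) (hSx : ‖S - x‖ ≤ (m - 1 : ℤ) * R)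
    (hSx' : ‖S' + x‖ ≤ (m' + 1 : ℤ) * R) (hST : ‖S - T‖ ≤ δ) (hST' : ‖S' - T'‖ ≤ δ) (hδ : δ ≤ R) :
    |moveGain m m' S S' x - moveGain m m' T T' x| ≤ 12 * δ * R := by
  have h₁ := abs_le.1 <| abs_clusterEnergy_sub_le (by omega) hSx
    (by rwa [sub_sub_sub_cancel_right] : ‖S - x - (T - x)‖ ≤ δ) hδ
  have h₂ := abs_le.1 <| abs_clusterEnergy_sub_le (by omega) hSx'
    (by rwa [add_sub_add_right_eq_sub] : ‖S' + x - (T' + x)‖ ≤ δ) hδ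
  have h₃ := abs_le.1 <| abs_clusterEnergy_sub_le (by omega) hS hST hδ
  have h₄ := abs_le.1 <| abs_clusterEnergy_sub_le hm' hS' hST' hδ
  unfold moveGain
  exact abs_le.2 ⟨by linarith, by linarith⟩

variable [InnerProductSpace ℝ E]

lemma clusterEnergy_add (m : ℤ) (S x : E) :
    clusterEnergy m (S + x) =
      clusterEnergy m S + inner ℝ ((2 * (m : ℝ)⁻¹) • S) x + (m : ℝ)⁻¹ * ‖x‖ ^ 2 := by
  simp only [clusterEnergy, norm_add_sq_real, real_inner_smul_left]
  ring

lemma moveGain_eq_quadratic (m m' : ℤ) (S S' x : E) :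
    moveGain m m' S S' x =
      (((m - 1 : ℤ) : ℝ)⁻¹ + ((m' + 1 : ℤ) : ℝ)⁻¹) * ‖x‖ ^ 2 +
        inner ℝ ((2 * ((m' + 1 : ℤ) : ℝ)⁻¹) • S' - (2 * ((m - 1 : ℤ) : ℝ)⁻¹) • S) x +
        moveGain m m' S S' 0 := by
  simp only [moveGain, sub_eq_add_neg S, clusterEnergy_add, inner_sub_left, inner_neg_right,
    norm_neg, neg_zero, inner_zero_right, norm_zero]
  ring

lemma sum_norm_sub_center_sq {ι : Type*} (s : Finset ι) (X : ι → E) :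
    ∑ j ∈ s, ‖X j - (s.card : ℝ)⁻¹ • ∑ l ∈ s, X l‖ ^ 2 =
      ∑ j ∈ s, ‖X j‖ ^ 2 - clusterEnergy s.card (∑ l ∈ s, X l) := by
  rcases s.eq_empty_or_nonempty with rfl | hs
  · simp [clusterEnergy]
  have hcard : (s.card : ℝ) ≠ 0 := mod_cast hs.card_ne_zero
  simp only [norm_sub_sq_real, Finset.sum_add_distrib, Finset.sum_sub_distrib, ← Finset.mul_sum,
    ← sum_inner, real_inner_smul_right, real_inner_self_eq_norm_sq, norm_smul, norm_inv,
    RCLike.norm_natCast, Finset.sum_const, nsmul_eq_mul, clusterEnergy, Int.cast_natCast]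
  field_simp
  ring

end Energy

section Potential

variable {X : Fin n → EuclideanSpace ℝ (Fin d)} {cl cl' : Fin n → Fin k}

lemma kmeansPot_eq_sub_sum_clusterEnergy (X : Fin n → EuclideanSpace ℝ (Fin d))
    (cl : Fin n → Fin k) :
    kmeansPot X cl =
      ∑ j, ‖X j‖ ^ 2 - ∑ i, clusterEnergy (clusterSize cl i) (clusterSum X cl i) := by
  simp only [kmeansPot, clusterCtr, sum_norm_sub_center_sq, Finset.sum_sub_distrib]
  congr 1
  exact Finset.sum_fiberwise Finset.univ cl fun j ↦ ‖X j‖ ^ 2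

lemma kmeansPot_nonneg (X : Fin n → EuclideanSpace ℝ (Fin d)) (cl : Fin n → Fin k) :
    0 ≤ kmeansPot X cl :=
  Finset.sum_nonneg fun _ _ ↦ Finset.sum_nonneg fun _ _ ↦ sq_nonneg _

lemma kmeansPot_le {R : ℝ} (hX : ∀ j, ‖X j‖ ≤ R) (cl : Fin n → Fin k) :
    kmeansPot X cl ≤ n * R ^ 2 := by
  have henergy : 0 ≤ ∑ i, clusterEnergy (clusterSize cl i) (clusterSum X cl i) :=
    Finset.sum_nonneg fun i _ ↦ clusterEnergy_nonneg (clusterSize_nonneg cl i) _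
  have hnorm : ∑ j, ‖X j‖ ^ 2 ≤ n * R ^ 2 :=
    (Finset.sum_le_card_nsmul _ _ (R ^ 2) fun j _ ↦
      pow_le_pow_left₀ (norm_nonneg _) (hX j) 2).trans_eq (by simp)
  rw [kmeansPot_eq_sub_sum_clusterEnergy]
  linarith

lemma Reassigns.kmeansPot_sub {j : Fin n} (h : Reassigns j cl cl')
    (X : Fin n → EuclideanSpace ℝ (Fin d)) :
    kmeansPot X cl - kmeansPot X cl' =
      moveGain (clusterSize cl (cl j)) (clusterSize cl (cl' j))
        (clusterSum X cl (cl j)) (clusterSum X cl (cl' j)) (X j) := by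
  rw [kmeansPot_eq_sub_sum_clusterEnergy, kmeansPot_eq_sub_sum_clusterEnergy,
    sub_sub_sub_cancel_left, ← Finset.sum_sub_distrib,
    Fintype.sum_eq_add (cl j) (cl' j) h.1.symm fun i hi ↦ ?unchanged,
    h.clusterSum_source, h.clusterSum_target, h.clusterSize_source, h.clusterSize_target, moveGain]
  case unchanged =>
    rw [h.clusterSum_of_ne X hi.1 hi.2, ← clusterSum_one, ← clusterSum_one,
      h.clusterSum_of_ne _ hi.1 hi.2, sub_self]
  ring

lemma Reassigns.abs_kmeansPot_sub_sub_moveGain_le {j : Fin n} (h : Reassigns j cl cl') {R δ : ℝ}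
    (hX : ∀ j, ‖X j‖ ≤ R) (hδ : δ ≤ R) {S : Fin k → EuclideanSpace ℝ (Fin d)}
    (hS : ∀ i, ‖clusterSum X cl i - S i‖ ≤ δ) :
    |kmeansPot X cl - kmeansPot X cl' -
      moveGain (clusterSize cl (cl j)) (clusterSize cl (cl' j)) (S (cl j)) (S (cl' j)) (X j)| ≤
        12 * δ * R := by
  have hsource : 0 ≤ clusterSize cl' (cl j) := clusterSize_nonneg _ _
  rw [h.clusterSize_source] at hsource
  rw [h.kmeansPot_sub]
  refine abs_moveGain_sub_le (by omega) (clusterSize_nonneg _ _) (norm_clusterSum_le hX _ _)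
    (norm_clusterSum_le hX _ _) ?_ ?_ (hS _) (hS _) hδ
  · simpa only [h.clusterSum_source, h.clusterSize_source] using norm_clusterSum_le hX cl' (cl j)
  · simpa only [h.clusterSum_target, h.clusterSize_target] using norm_clusterSum_le hX cl' (cl' j)

end Potential

section FirstOccurrences

lemma exists_first_occurrences {α : Type*} [DecidableEq α] (f : ℕ → α) {W m : ℕ}
    (hm : m ≤ ((Finset.range W).image f).card) :
    ∃ τ : Fin m → ℕ, (∀ j, τ j < W) ∧ Function.Injective (f ∘ τ) ∧
      ∀ j, ∀ s < τ j, ∃ l < j, f (τ l) = f s := by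
  induction m with
  | zero => exact ⟨Fin.elim0, nofun, nofun, nofun⟩
  | succ m ih =>
    obtain ⟨τ, hτW, hτinj, hτ⟩ := ih (by omega)
    have hnew : ∃ s, s < W ∧ ∀ l, f (τ l) ≠ f s := by
      have hcard : (Finset.univ.image (f ∘ τ)).card < ((Finset.range W).image f).card :=
        Finset.card_image_le.trans_lt (by simpa using hm)
      obtain ⟨v, hvW, hvτ⟩ := Finset.exists_mem_notMem_of_card_lt_card hcard
      obtain ⟨s, hsW, rfl⟩ := Finset.mem_image.1 hvW
      exact ⟨s, Finset.mem_range.1 hsW, by simpa using hvτ⟩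
    obtain ⟨hW, hfresh⟩ := Nat.find_spec hnew
    refine ⟨Fin.snoc τ (Nat.find hnew), ?_, ?_, ?_⟩
    · exact Fin.lastCases (by rwa [Fin.snoc_last]) fun j ↦ by
        simpa only [Fin.snoc_castSucc] using hτW j
    · rw [Fin.comp_snoc, Fin.snoc_injective_iff]
      exact ⟨hτinj, fun ⟨l, hl⟩ ↦ hfresh l hl⟩
    · refine Fin.lastCases ?_ fun j ↦ ?_
      · intro s hs
        rw [Fin.snoc_last] at hs
        have hs' := Nat.find_min hnew hs
        push Not at hs'
        obtain ⟨l, hl⟩ := hs' (hs.trans hW)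
        exact ⟨l.castSucc, l.castSucc_lt_last, by rwa [Fin.snoc_castSucc]⟩
      · intro s hs
        rw [Fin.snoc_castSucc] at hs
        obtain ⟨l, hlj, hl⟩ := hτ j s hs
        exact ⟨l.castSucc, Fin.castSucc_lt_castSucc_iff.2 hlj, by rwa [Fin.snoc_castSucc]⟩

end FirstOccurrences

/-- The first `L` steps of `seq` each reassign a single point and strictly decrease `Φ`. -/
def IsImprovingSeq (Φ : (Fin n → Fin k) → ℝ) (L : ℕ) (seq : ℕ → Fin n → Fin k) : Prop :=
  ∀ t < L, SingleMove (seq t) (seq (t + 1)) ∧ Φ (seq (t + 1)) < Φ (seq t)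

namespace IsImprovingSeq

variable {Φ : (Fin n → Fin k) → ℝ} {L : ℕ} {seq : ℕ → Fin n → Fin k}

lemma strictAntiOn (h : IsImprovingSeq Φ L seq) : StrictAntiOn (fun t ↦ Φ (seq t)) (Set.Iic L) :=
  strictAntiOn_Iic_of_succ_lt fun t ht ↦ (h t ht).2

lemma injOn (h : IsImprovingSeq Φ L seq) : Set.InjOn seq (Set.Iic L) := fun _ hs _ ht hst ↦
  h.strictAntiOn.injOn hs ht (congrArg Φ hst)

lemma lt_pow (h : IsImprovingSeq Φ L seq) : L < k ^ n := by
  simpa using Finset.card_le_card_of_injOn (s := Finset.Iic L) (t := Finset.univ) seq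
    (by simp) (by simpa using h.injOn)

lemma shift {W s : ℕ} (h : IsImprovingSeq Φ L seq) (hsW : s + W ≤ L) :
    IsImprovingSeq Φ W fun t ↦ seq (s + t) :=
  fun t ht ↦ h (s + t) (by omega)

lemma length_le_of_window_drop (h : IsImprovingSeq Φ L seq) {W : ℕ} (hW : 0 < W) {C ε : ℝ}
    (hε : 0 < ε) (hΦ₀ : ∀ cl, 0 ≤ Φ cl) (hΦC : ∀ cl, Φ cl ≤ C)
    (hdrop : ∀ seq, IsImprovingSeq Φ W seq → ε ≤ Φ (seq 0) - Φ (seq W)) :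
    (L : ℝ) ≤ W * (1 + C / ε) := by
  have hwindows (q : ℕ) (hq : q * W ≤ L) : Φ (seq (q * W)) ≤ C - q * ε := by
    induction q with
    | zero => simpa using hΦC (seq 0)
    | succ q ih =>
      have hqW : q * W + W ≤ L := by rwa [← Nat.succ_mul]
      have hstep := hdrop _ (h.shift hqW)
      rw [add_zero, ← Nat.succ_mul] at hstep
      push_cast
      linarith [ih (by omega)]
  have hquot : (L / W : ℕ) ≤ C / ε := by
    rw [le_div_iff₀ hε]
    linarith [hwindows _ (Nat.div_mul_le_self L W), hΦ₀ (seq (L / W * W))]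
  calc (L : ℝ) ≤ W * (1 + (L / W : ℕ)) := mod_cast (by
        rw [add_comm 1]; exact (Nat.lt_mul_div_succ L hW).le)
    _ ≤ W * (1 + C / ε) := by gcongr

end IsImprovingSeq

section Movers

variable {seq : ℕ → Fin n → Fin k} {L : ℕ} {mover : ℕ → Fin n}

lemma eq_initial_of_forall_mover_ne
    (hmover : ∀ t < L, Reassigns (mover t) (seq t) (seq (t + 1))) {p : Fin n} {t : ℕ} (ht : t ≤ L)
    (hp : ∀ s < t, mover s ≠ p) : seq t p = seq 0 p := by
  induction t with
  | zero => rfl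
  | succ t ih =>
    rw [(hmover t ht).2 p (hp t t.lt_succ_self).symm]
    exact ih (by omega) fun s hs ↦ hp s (hs.trans t.lt_succ_self)

lemma lt_pow_card_movers (hmover : ∀ t < L, Reassigns (mover t) (seq t) (seq (t + 1)))
    (hinj : Set.InjOn seq (Set.Iic L)) : L < k ^ ((Finset.range L).image mover).card := by
  set V := (Finset.range L).image mover
  have hstay {t : ℕ} (ht : t ≤ L) {p : Fin n} (hp : p ∉ V) : seq t p = seq 0 p :=
    eq_initial_of_forall_mover_ne hmover ht fun s hs hsp ↦
      hp (hsp ▸ Finset.mem_image_of_mem mover (Finset.mem_range.2 (hs.trans_le ht)))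
  have hrestrict : Set.InjOn (fun t (v : V) ↦ seq t v) (Set.Iic L) := fun s hs t ht hst ↦ by
    refine hinj hs ht (funext fun p ↦ ?_)
    by_cases hp : p ∈ V
    · exact congrFun hst ⟨p, hp⟩
    · rw [hstay hs hp, hstay ht hp]
  simpa using Finset.card_le_card_of_injOn (s := Finset.Iic L) (t := Finset.univ)
    (fun t (v : V) ↦ seq t v) (by simp) (by simpa using hrestrict)

lemma IsImprovingSeq.exists_first_moves {Φ : (Fin n → Fin k) → ℝ} {m : ℕ} (hk : 0 < k)
    (h : IsImprovingSeq Φ (k ^ m) seq) :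
    ∃ (a : Fin m ↪ Fin n) (τ : Fin m → ℕ), ∀ j,
      τ j < k ^ m ∧ Reassigns (a j) (seq (τ j)) (seq (τ j + 1)) ∧
        ∀ p, (∀ l < j, a l ≠ p) → seq (τ j) p = seq 0 p := by
  have : Nonempty (Fin n) := ⟨(h 0 (Nat.pow_pos hk)).1.choose⟩
  choose! mover hmover using fun t ht ↦ (h t ht).1
  have hcard : m ≤ ((Finset.range (k ^ m)).image mover).card := by
    by_contra! hlt
    exact (lt_pow_card_movers hmover h.injOn).not_ge (Nat.pow_le_pow_right hk hlt.le)
  obtain ⟨τ, hτW, hτinj, hτ⟩ := exists_first_occurrences mover hcard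
  refine ⟨⟨mover ∘ τ, hτinj⟩, τ, fun j ↦ ⟨hτW j, hmover _ (hτW j), fun p hp ↦ ?_⟩⟩
  refine eq_initial_of_forall_mover_ne hmover (hτW j).le fun s hs hsp ↦ ?_
  obtain ⟨l, hlj, hl⟩ := hτ j s hs
  exact hp l hlj (hl.trans hsp)

end Movers

lemma exists_isImprovingSeq_maxImprovingSeqLen (hk : 0 < k)
    (X : Fin n → EuclideanSpace ℝ (Fin d)) :
    ∃ seq : ℕ → Fin n → Fin k, IsImprovingSeq (kmeansPot X) (maxImprovingSeqLen n k d X) seq :=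
  Nat.sSup_mem (s := {L | ∃ seq : ℕ → Fin n → Fin k, IsImprovingSeq (kmeansPot X) L seq})
    ⟨0, fun _ _ ↦ ⟨0, hk⟩, nofun⟩ ⟨k ^ n, fun _ ⟨_, hseq⟩ ↦ hseq.lt_pow.le⟩

lemma maxImprovingSeqLen_lt_pow (hk : 0 < k) (X : Fin n → EuclideanSpace ℝ (Fin d)) :
    maxImprovingSeqLen n k d X < k ^ n :=
  let ⟨_, hseq⟩ := exists_isImprovingSeq_maxImprovingSeqLen hk X
  hseq.lt_pow

/-- What one needs to know about a window of moves in order to express the gains of its first `m`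
distinct moving points: these points in the order of their first moves, their labels at the start
of the window, and the sizes and (approximate) sums of all clusters at the start of the window. -/
structure WindowData (n k m : ℕ) (E : Type*) where
  mover : Fin m ↪ Fin n
  label : Fin m → Fin k
  size : Fin k → ℤ
  sum : Fin k → E

namespace WindowData

variable {m : ℕ}

section General

variable {E : Type*} [SeminormedAddCommGroup E] (D : WindowData n k m E)

/-- The size of cluster `i` once the movers preceding `j` have the labels `g`. -/
def sizeAt (j : Fin m) (g : Finset.Iio j → Fin k) (i : Fin k) : ℤ :=
  D.size i + moveShift (fun l : Finset.Iio j ↦ D.label l) g (fun _ ↦ 1) i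

/-- The (approximate) sum of cluster `i` once the movers preceding `j` have the labels `g`. -/
def sumAt (X : Fin n → E) (j : Fin m) (g : Finset.Iio j → Fin k) (i : Fin k) : E :=
  D.sum i + moveShift (fun l : Finset.Iio j ↦ D.label l) g (fun l ↦ X (D.mover l)) i

/-- When the `j`-th mover goes to cluster `b` while its predecessors have the labels `g`, its
gain is at most `η` in absolute value. The conditions on the sizes make the coefficient of
`‖x‖ ^ 2` in this gain, as a function of the moving point `x`, at least `1 / n`. -/
def SmallGainAt (η : ℝ) (j : Fin m) (g : Finset.Iio j → Fin k) (b : Fin k) (X : Fin n → E) :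
    Prop :=
  (1 ≤ D.sizeAt j g (D.label j) ∧ 0 ≤ D.sizeAt j g b ∧ D.sizeAt j g b + 1 ≤ n) ∧
    |moveGain (D.sizeAt j g (D.label j)) (D.sizeAt j g b) (D.sumAt X j g (D.label j))
      (D.sumAt X j g b) (X (D.mover j))| ≤ η

/-- The `j`-th mover may have gain at most `η` at its first move. -/
def SmallGain (η : ℝ) (j : Fin m) (X : Fin n → E) : Prop :=
  ∃ (g : Finset.Iio j → Fin k) (b : Fin k), D.SmallGainAt η j g b X

lemma sumAt_update (X : Fin n → E) {j l : Fin m} (hjl : j ≤ l) (g : Finset.Iio j → Fin k)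
    (i : Fin k) (x : E) : D.sumAt (Function.update X (D.mover l) x) j g i = D.sumAt X j g i := by
  have hne (l' : Finset.Iio j) : D.mover l' ≠ D.mover l :=
    D.mover.injective.ne ((Finset.mem_Iio.1 l'.2).trans_le hjl).ne
  simp only [sumAt, Function.update_of_ne (hne _)]

lemma smallGain_update_iff (η : ℝ) {j l : Fin m} (hjl : j < l) (X : Fin n → E) (x : E) :
    D.SmallGain η j (Function.update X (D.mover l) x) ↔ D.SmallGain η j X := by
  simp only [SmallGain, SmallGainAt, D.sumAt_update X hjl.le,
    Function.update_of_ne (D.mover.injective.ne hjl.ne)]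

lemma continuous_sumAt (j : Fin m) (g : Finset.Iio j → Fin k) (i : Fin k) :
    Continuous fun X : Fin n → E ↦ D.sumAt X j g i := by
  unfold sumAt moveShift
  refine continuous_const.add (continuous_finsetSum _ fun l _ ↦ .sub ?_ ?_)
  all_goals exact (continuous_apply i).comp ((continuous_single _).comp (continuous_apply _))

lemma isClosed_smallGain (η : ℝ) (j : Fin m) : IsClosed {X | D.SmallGain η j X} := by
  have hunion : {X | D.SmallGain η j X} = ⋃ g, ⋃ b, {X | D.SmallGainAt η j g b X} := by
    ext X
    simp [SmallGain]
  rw [hunion]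
  exact isClosed_iUnion_of_finite fun g ↦ isClosed_iUnion_of_finite fun b ↦
    isClosed_const.and <| isClosed_le
      (continuous_moveGain _ _ (D.continuous_sumAt j g _) (D.continuous_sumAt j g _)
        (continuous_apply _)).abs continuous_const

end General

section Probability

variable (D : WindowData n k m (EuclideanSpace ℝ (Fin d)))

lemma pi_gaussianReal_smallGainAt_le (hd : 0 < d) (μ : Fin d → ℝ) {v : NNReal} (hv : v ≠ 0)
    {η : ℝ} (hη : 0 ≤ η) (j : Fin m) (g : Finset.Iio j → Fin k) (b : Fin k)
    (X : Fin n → EuclideanSpace ℝ (Fin d)) :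
    Measure.pi (fun t ↦ gaussianReal (μ t) v)
        {x | D.SmallGainAt η j g b (Function.update X (D.mover j) (toEuc x))} ≤
      ENNReal.ofReal (2 * √(η * n / (Real.pi * v))) := by
  simp only [SmallGainAt, D.sumAt_update X le_rfl, Function.update_self]
  by_cases hsize : 1 ≤ D.sizeAt j g (D.label j) ∧ 0 ≤ D.sizeAt j g b ∧ D.sizeAt j g b + 1 ≤ n
  swap
  · simp only [hsize, false_and, Set.ofPred_false, measure_empty, zero_le]
  simp only [hsize, and_self, true_and]
  obtain ⟨hm, hm', hmn⟩ := hsize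
  set m₁ := D.sizeAt j g (D.label j)
  set m₂ := D.sizeAt j g b
  simp_rw [moveGain_eq_quadratic _ _ _ _ (toEuc _)]
  have hm₁ : (0 : ℝ) ≤ ((m₁ - 1 : ℤ) : ℝ)⁻¹ := inv_nonneg.2 (mod_cast by omega)
  have hm₂ : (0 : ℝ) < ((m₂ + 1 : ℤ) : ℝ) := mod_cast by omega
  have hn : (0 : ℝ) < n := mod_cast (by omega : 0 < n)
  have hκ : (n : ℝ)⁻¹ ≤ ((m₁ - 1 : ℤ) : ℝ)⁻¹ + ((m₂ + 1 : ℤ) : ℝ)⁻¹ :=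
    (inv_anti₀ hm₂ (mod_cast hmn)).trans (le_add_of_nonneg_left hm₁)
  have : (0 : ℝ) < v := NNReal.coe_pos.2 (pos_iff_ne_zero.2 hv)
  refine (pi_gaussianReal_abs_quadratic_le hd μ hv ((inv_pos.2 hn).trans_le hκ) _ _ η).trans ?_
  refine ENNReal.ofReal_le_ofReal (mul_le_mul_of_nonneg_left (Real.sqrt_le_sqrt ?_) zero_le_two)
  calc η / (Real.pi * _ * v) ≤ η / (Real.pi * (n : ℝ)⁻¹ * v) := by gcongr
    _ = η * n / (Real.pi * v) := by field_simp

lemma pi_gaussianReal_smallGain_le (hd : 0 < d) (μ : Fin d → ℝ) {v : NNReal} (hv : v ≠ 0)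
    {η : ℝ} (hη : 0 ≤ η) (j : Fin m) (X : Fin n → EuclideanSpace ℝ (Fin d)) :
    Measure.pi (fun t ↦ gaussianReal (μ t) v)
        {x | D.SmallGain η j (Function.update X (D.mover j) (toEuc x))} ≤
      k ^ ((j : ℕ) + 1) * ENNReal.ofReal (2 * √(η * n / (Real.pi * v))) := by
  have hunion : {x | D.SmallGain η j (Function.update X (D.mover j) (toEuc x))} =
      ⋃ gb : (Finset.Iio j → Fin k) × Fin k,
        {x | D.SmallGainAt η j gb.1 gb.2 (Function.update X (D.mover j) (toEuc x))} := by
    ext x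
    simp [SmallGain]
  rw [hunion]
  refine (measure_iUnion_fintype_le _ _).trans <| (Finset.sum_le_card_nsmul _ _ _ fun gb _ ↦
    D.pi_gaussianReal_smallGainAt_le hd μ hv hη j gb.1 gb.2 X).trans_eq ?_
  simp only [Finset.card_univ, Fintype.card_prod, Fintype.card_fun, Fintype.card_fin,
    Fintype.card_coe, Fin.card_Iio, nsmul_eq_mul, Nat.cast_mul, Nat.cast_pow, pow_succ]

lemma pi_gaussianReal_forall_smallGain_le (hd : 0 < d) (Y : Fin n → Fin d → ℝ) {v : NNReal}
    (hv : v ≠ 0) {η : ℝ} (hη : 0 ≤ η) :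
    Measure.pi (fun i ↦ Measure.pi fun t ↦ gaussianReal (Y i t) v)
        {ω | ∀ j, D.SmallGain η j fun i ↦ toEuc (ω i)} ≤
      ∏ j : Fin m, k ^ ((j : ℕ) + 1) * ENNReal.ofReal (2 * √(η * n / (Real.pi * v))) := by
  have hupdate (ω : Fin n → Fin d → ℝ) (l : Fin m) (x : Fin d → ℝ) :
      (fun i ↦ toEuc (Function.update ω (D.mover l) x i)) =
        Function.update (fun i ↦ toEuc (ω i)) (D.mover l) (toEuc x) :=
    Function.comp_update toEuc ω (D.mover l) x
  rw [Set.ofPred_forall]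
  refine pi_iInter_le_prod _ D.mover (fun j ↦ ?_) (fun j l hjl ω x ↦ ?_) fun j ω ↦ ?_
  · have hcont := continuous_toEuc (d := d)
    exact ((D.isClosed_smallGain η j).preimage (by fun_prop)).measurableSet
  · simpa only [Set.mem_ofPred_eq, hupdate] using D.smallGain_update_iff η hjl _ _
  · simpa only [Set.mem_ofPred_eq, hupdate] using D.pi_gaussianReal_smallGain_le hd _ hv hη j _

end Probability

section Description

/-- The data `D` describe the labeling `cl₀` of the points `X`, with an error of at most `δ` in
each cluster sum. -/
structure Describes {E : Type*} [SeminormedAddCommGroup E] (D : WindowData n k m E) (δ : ℝ)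
    (X : Fin n → E) (cl₀ : Fin n → Fin k) : Prop where
  label_eq : ∀ l, D.label l = cl₀ (D.mover l)
  size_eq : ∀ i, D.size i = clusterSize cl₀ i
  norm_sum_sub_le : ∀ i, ‖clusterSum X cl₀ i - D.sum i‖ ≤ δ

variable {E : Type*} {D : WindowData n k m E} {δ : ℝ} {j : Fin m} {cl₀ cl : Fin n → Fin k}

lemma clusterSum_eq_add_moveShift_mover {M : Type*} [AddCommGroup M]
    (hlabel : ∀ l, D.label l = cl₀ (D.mover l))
    (hfresh : ∀ p, (∀ l < j, D.mover l ≠ p) → cl p = cl₀ p) (x : Fin n → M) (i : Fin k) :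
    clusterSum x cl i = clusterSum x cl₀ i +
      moveShift (fun l : Finset.Iio j ↦ D.label l) (fun l ↦ cl (D.mover l))
        (fun l ↦ x (D.mover l)) i := by
  have hinj : Function.Injective fun l : Finset.Iio j ↦ D.mover l :=
    D.mover.injective.comp Subtype.val_injective
  simp only [hlabel]
  exact clusterSum_eq_add_moveShift hinj (fun q hq ↦
    hfresh q fun l hl hlq ↦ hq ⟨⟨l, Finset.mem_Iio.2 hl⟩, hlq⟩) x i

variable [SeminormedAddCommGroup E] {X : Fin n → E}

lemma Describes.sizeAt_eq (hD : D.Describes δ X cl₀)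
    (hfresh : ∀ p, (∀ l < j, D.mover l ≠ p) → cl p = cl₀ p) (i : Fin k) :
    D.sizeAt j (fun l ↦ cl (D.mover l)) i = clusterSize cl i := by
  rw [sizeAt, hD.size_eq, ← clusterSum_one, ← clusterSum_one,
    ← clusterSum_eq_add_moveShift_mover hD.label_eq hfresh fun _ ↦ (1 : ℤ)]

lemma Describes.norm_clusterSum_sub_sumAt_le (hD : D.Describes δ X cl₀)
    (hfresh : ∀ p, (∀ l < j, D.mover l ≠ p) → cl p = cl₀ p) (i : Fin k) :
    ‖clusterSum X cl i - D.sumAt X j (fun l ↦ cl (D.mover l)) i‖ ≤ δ := by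
  rw [clusterSum_eq_add_moveShift_mover hD.label_eq hfresh, sumAt, add_sub_add_right_eq_sub]
  exact hD.norm_sum_sub_le i

end Description

lemma Describes.smallGain {D : WindowData n k m (EuclideanSpace ℝ (Fin d))} {δ R ε : ℝ}
    {X : Fin n → EuclideanSpace ℝ (Fin d)} {cl₀ cl cl' : Fin n → Fin k} {j : Fin m}
    (hD : D.Describes δ X cl₀) (hfresh : ∀ p, (∀ l < j, D.mover l ≠ p) → cl p = cl₀ p)
    (hX : ∀ p, ‖X p‖ ≤ R) (hδ : δ ≤ R) (hmove : Reassigns (D.mover j) cl cl')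
    (hgain : |kmeansPot X cl - kmeansPot X cl'| ≤ ε) :
    D.SmallGain (ε + 12 * δ * R) j X := by
  have hsource : cl (D.mover j) = D.label j := by
    rw [hD.label_eq, hfresh]
    exact fun l hl ↦ D.mover.injective.ne hl.ne
  refine ⟨fun l ↦ cl (D.mover l), cl' (D.mover j), ?_⟩
  simp only [SmallGainAt, hD.sizeAt_eq hfresh]
  refine ⟨⟨?_, clusterSize_nonneg _ _, ?_⟩, ?_⟩
  · have hrest := clusterSize_nonneg cl' (cl (D.mover j))
    rw [hmove.clusterSize_source, hsource] at hrest
    omega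
  · exact hmove.clusterSize_target ▸ clusterSize_le cl' _
  · have happrox := abs_le.1 <|
      hmove.abs_kmeansPot_sub_sub_moveGain_le hX hδ (hD.norm_clusterSum_sub_sumAt_le hfresh)
    rw [hsource] at happrox
    exact abs_le.2 ⟨by linarith [abs_le.1 hgain], by linarith [abs_le.1 hgain]⟩

end WindowData

section WindowCode

variable {m : ℕ}

/-- The window data whose cluster sums are restricted to a finite net `A`, as a finite type. -/
abbrev WindowCode (n k m : ℕ) {E : Type*} (A : Finset E) : Type _ :=
  (Fin m ↪ Fin n) × (Fin m → Fin k) × (Fin k → Fin (n + 1)) × (Fin k → A)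

/-- The window data that a code stands for. -/
def WindowCode.toData {E : Type*} {A : Finset E} (c : WindowCode n k m A) : WindowData n k m E where
  mover := c.1
  label := c.2.1
  size i := (c.2.2.1 i : ℕ)
  sum i := c.2.2.2 i

/-- Some window data over the net `A` allow gains of at most `η` at all `m` first moves. -/
def SmallGainWindow (k m : ℕ) (A : Finset (EuclideanSpace ℝ (Fin d))) (η : ℝ)
    (X : Fin n → EuclideanSpace ℝ (Fin d)) : Prop :=
  ∃ c : WindowCode n k m A, ∀ j, c.toData.SmallGain η j X

lemma card_windowCode_le {E : Type*} (A : Finset E) :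
    Fintype.card (WindowCode n k m A) ≤ n ^ m * (k ^ m * ((n + 1) ^ k * A.card ^ k)) := by
  simp only [Fintype.card_prod, Fintype.card_embedding_eq, Fintype.card_fun, Fintype.card_fin,
    Fintype.card_coe]
  gcongr
  exact Nat.descFactorial_le_pow n m

lemma setOf_smallGainWindow (A : Finset (EuclideanSpace ℝ (Fin d))) (η : ℝ) :
    {ω : Fin n → Fin d → ℝ | SmallGainWindow k m A η fun i ↦ toEuc (ω i)} =
      ⋃ c : WindowCode n k m A, {ω | ∀ j, c.toData.SmallGain η j fun i ↦ toEuc (ω i)} := by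
  ext ω
  simp [SmallGainWindow]

lemma measurableSet_smallGainWindow (A : Finset (EuclideanSpace ℝ (Fin d))) (η : ℝ) :
    MeasurableSet {ω : Fin n → Fin d → ℝ | SmallGainWindow k m A η fun i ↦ toEuc (ω i)} := by
  have hcont := continuous_toEuc (d := d)
  rw [setOf_smallGainWindow]
  refine .iUnion fun c ↦ ?_
  rw [Set.ofPred_forall]
  exact .iInter fun j ↦ ((c.toData.isClosed_smallGain η j).preimage (by fun_prop)).measurableSet

lemma perturbedPoints_smallGainWindow_le (hd : 0 < d) (Y : Fin n → Fin d → ℝ) {σ : ℝ}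
    (hσ : 0 < σ) (A : Finset (EuclideanSpace ℝ (Fin d))) {η : ℝ} (hη : 0 ≤ η) :
    perturbedPoints n d Y σ {ω | SmallGainWindow k m A η fun i ↦ toEuc (ω i)} ≤
      ENNReal.ofReal (n ^ m * k ^ m * (n + 1) ^ k * A.card ^ k *
        k ^ (∑ j : Fin m, ((j : ℕ) + 1)) * (2 * √(η * n / (Real.pi * σ ^ 2))) ^ m) := by
  set q := 2 * √(η * n / (Real.pi * σ ^ 2))
  have hdata (c : WindowCode n k m A) :
      perturbedPoints n d Y σ {ω | ∀ j, c.toData.SmallGain η j fun i ↦ toEuc (ω i)} ≤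
        k ^ (∑ j : Fin m, ((j : ℕ) + 1)) * ENNReal.ofReal q ^ m := by
    have hv : (σ ^ 2).toNNReal ≠ 0 := by simpa using hσ.ne'
    refine (c.toData.pi_gaussianReal_forall_smallGain_le hd Y hv hη).trans_eq ?_
    rw [Real.coe_toNNReal _ (sq_nonneg σ), Finset.prod_mul_distrib, Finset.prod_pow_eq_pow_sum,
      Finset.prod_const, Finset.card_univ, Fintype.card_fin]
  rw [setOf_smallGainWindow]
  calc perturbedPoints n d Y σ (⋃ c : WindowCode n k m A, _)
      ≤ Fintype.card (WindowCode n k m A) •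
          (k ^ (∑ j : Fin m, ((j : ℕ) + 1)) * ENNReal.ofReal q ^ m) :=
        (measure_iUnion_fintype_le _ _).trans (Finset.sum_le_card_nsmul _ _ _ fun c _ ↦ hdata c)
    _ ≤ (n ^ m * (k ^ m * ((n + 1) ^ k * A.card ^ k)) : ℕ) *
          (k ^ (∑ j : Fin m, ((j : ℕ) + 1)) * ENNReal.ofReal q ^ m) := by
        rw [nsmul_eq_mul]
        gcongr
        exact card_windowCode_le A
    _ = _ := by
        rw [← ENNReal.ofReal_natCast, ← ENNReal.ofReal_natCast k,
          ← ENNReal.ofReal_pow (by positivity), ← ENNReal.ofReal_pow (by positivity),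
          ← ENNReal.ofReal_mul (by positivity), ← ENNReal.ofReal_mul (by positivity)]
        push_cast
        ring_nf

lemma IsImprovingSeq.smallGainWindow {X : Fin n → EuclideanSpace ℝ (Fin d)}
    {seq : ℕ → Fin n → Fin k} (hk : 0 < k) (h : IsImprovingSeq (kmeansPot X) (k ^ m) seq)
    {A : Finset (EuclideanSpace ℝ (Fin d))} {R δ ε : ℝ} (hX : ∀ p, ‖X p‖ ≤ R) (hδ : δ ≤ R)
    (hA : ∀ y, ‖y‖ ≤ n * R → ∃ z ∈ A, ‖y - z‖ ≤ δ)
    (hdrop : kmeansPot X (seq 0) - kmeansPot X (seq (k ^ m)) ≤ ε) :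
    SmallGainWindow k m A (ε + 12 * δ * R) X := by
  obtain ⟨a, τ, hτ⟩ := h.exists_first_moves hk
  have hnet (i : Fin k) : ∃ z : A, ‖clusterSum X (seq 0) i - z‖ ≤ δ := by
    obtain ⟨p, -⟩ := (h 0 (Nat.pow_pos hk)).1
    have hR : 0 ≤ R := (norm_nonneg _).trans (hX p)
    have hnorm : ‖clusterSum X (seq 0) i‖ ≤ n * R :=
      (norm_clusterSum_le hX _ _).trans <|
        mul_le_mul_of_nonneg_right (mod_cast clusterSize_le _ _) hR
    obtain ⟨z, hzA, hz⟩ := hA _ hnorm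
    exact ⟨⟨z, hzA⟩, hz⟩
  choose z hz using hnet
  have hcard (i : Fin k) : (clusterIdx (seq 0) i).card < n + 1 :=
    Nat.lt_succ_of_le (by simpa using (clusterIdx (seq 0) i).card_le_univ)
  refine ⟨⟨a, fun l ↦ seq 0 (a l), fun i ↦ ⟨_, hcard i⟩, z⟩, fun j ↦ ?_⟩
  obtain ⟨hτj, hmove, hfresh⟩ := hτ j
  refine WindowData.Describes.smallGain ⟨fun _ ↦ rfl, fun _ ↦ rfl, hz⟩ hfresh hX hδ hmove ?_
  have hanti := h.strictAntiOn.antitoneOn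
  have hstart := hanti (Set.mem_Iic.2 (Nat.zero_le _)) (Set.mem_Iic.2 hτj.le) (Nat.zero_le (τ j))
  have hend := hanti (Set.mem_Iic.2 hτj) (Set.mem_Iic.2 le_rfl) hτj
  have hstep := (h _ hτj).2
  exact abs_le.2 ⟨by linarith, by linarith⟩

end WindowCode

lemma norm_le_sqrt_mul_of_forall_abs_le (x : EuclideanSpace ℝ (Fin d)) {b : ℝ} (hb : 0 ≤ b)
    (h : ∀ i, |x i| ≤ b) : ‖x‖ ≤ √d * b := by
  rw [EuclideanSpace.norm_eq, Real.sqrt_le_left (by positivity), mul_pow,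
    Real.sq_sqrt (Nat.cast_nonneg d)]
  calc ∑ i, ‖x i‖ ^ 2 ≤ ∑ _ : Fin d, b ^ 2 :=
        Finset.sum_le_sum fun i _ ↦ pow_le_pow_left₀ (norm_nonneg _) (h i) 2
    _ = d * b ^ 2 := by simp

lemma exists_finset_net (hd : 0 < d) {r δ : ℝ} (hr : 0 ≤ r) (hδ : 0 < δ) :
    ∃ A : Finset (EuclideanSpace ℝ (Fin d)), (∀ y, ‖y‖ ≤ r → ∃ z ∈ A, ‖y - z‖ ≤ δ) ∧
      (A.card : ℝ) ≤ (2 * r * √d / δ + 3) ^ d := by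
  classical
  have hsqrt : 0 < √(d : ℝ) := by positivity
  set s := δ / √d with hs
  have hs₀ : 0 < s := by positivity
  set N : ℕ := ⌈r / s⌉₊
  refine ⟨(Fintype.piFinset fun _ : Fin d ↦ Finset.Icc (-N : ℤ) N).image
    fun v ↦ toEuc fun i ↦ s * v i, fun y hy ↦ ?_, ?_⟩
  · refine ⟨toEuc fun i ↦ s * ⌊y i / s⌋, Finset.mem_image_of_mem _ (Fintype.mem_piFinset.2
      fun i ↦ Finset.mem_Icc.2 ?_), ?_⟩
    · have hyi : |y i / s| ≤ N := by
        rw [abs_div, abs_of_pos hs₀]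
        exact (div_le_div_of_nonneg_right ((PiLp.norm_apply_le y i).trans hy) hs₀.le).trans
          (Nat.le_ceil _)
      obtain ⟨hlo, hhi⟩ := abs_le.1 hyi
      exact ⟨Int.le_floor.2 (by simpa using hlo), Int.floor_le_iff.2 (by push_cast; linarith)⟩
    · refine (norm_le_sqrt_mul_of_forall_abs_le _ hs₀.le fun i ↦ ?_).trans_eq
        (mul_div_cancel₀ δ hsqrt.ne')
      have hfract : (y - toEuc fun i ↦ s * ⌊y i / s⌋) i = s * Int.fract (y i / s) := by
        rw [Int.fract, mul_sub, mul_div_cancel₀ _ hs₀.ne']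
        rfl
      rw [hfract, abs_of_nonneg (mul_nonneg hs₀.le (Int.fract_nonneg _))]
      exact mul_le_of_le_one_right hs₀.le (Int.fract_lt_one _).le
  · have hcard : (Fintype.piFinset fun _ : Fin d ↦ Finset.Icc (-N : ℤ) N).card =
        (2 * N + 1) ^ d := by
      rw [Fintype.card_piFinset_const, Int.card_Icc]
      congr 1
      omega
    have hNle : (N : ℝ) ≤ r / s + 1 := (Nat.ceil_lt_add_one (by positivity)).le
    have hrs : 2 * r * √d / δ = 2 * (r / s) := by rw [hs]; field_simp
    calc _ ≤ (((2 * N + 1) ^ d : ℕ) : ℝ) := mod_cast Finset.card_image_le.trans hcard.le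
      _ ≤ (2 * r * √d / δ + 3) ^ d := by
        push_cast
        exact pow_le_pow_left₀ (by positivity) (by linarith) d

lemma maxImprovingSeqLen_le_of_not_smallGainWindow {m : ℕ} (hk : 0 < k)
    {X : Fin n → EuclideanSpace ℝ (Fin d)} {A : Finset (EuclideanSpace ℝ (Fin d))} {R δ ε : ℝ}
    (hX : ∀ p, ‖X p‖ ≤ R) (hδ : δ ≤ R) (hε : 0 < ε)
    (hA : ∀ y, ‖y‖ ≤ n * R → ∃ z ∈ A, ‖y - z‖ ≤ δ)
    (hsmall : ¬ SmallGainWindow k m A (ε + 12 * δ * R) X) :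
    (maxImprovingSeqLen n k d X : ℝ) ≤ k ^ m * (1 + n * R ^ 2 / ε) := by
  obtain ⟨seq, hseq⟩ := exists_isImprovingSeq_maxImprovingSeqLen hk X
  have hdrop (seq : ℕ → Fin n → Fin k) (h : IsImprovingSeq (kmeansPot X) (k ^ m) seq) :
      ε ≤ kmeansPot X (seq 0) - kmeansPot X (seq (k ^ m)) := by
    by_contra! hlt
    exact hsmall (h.smallGainWindow hk hX hδ hA hlt.le)
  exact_mod_cast hseq.length_le_of_window_drop (Nat.pow_pos hk) hε (kmeansPot_nonneg X)
    (kmeansPot_le hX) hdrop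

lemma sum_fin_four_mul_val_add_one (D : ℕ) :
    ∑ j : Fin (4 * D), ((j : ℕ) + 1) = (8 * D + 2) * D := by
  rw [Fin.sum_univ_eq_sum_range (· + 1)]
  induction D with
  | zero => rfl
  | succ D ih =>
    simp only [mul_add_one 4, Finset.sum_range_succ, ih]
    ring

lemma add_one_pow_le_two_mul_rpow_pow (hn : 0 < n) (hd : 0 < d) (k : ℕ) :
    ((n : ℝ) + 1) ^ k ≤ (2 * (n : ℝ) ^ (1 / (d : ℝ))) ^ (k * d) := by
  have hn₁ : (1 : ℝ) ≤ n := mod_cast hn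
  have htwo : (2 : ℝ) ≤ 2 ^ d := le_self_pow₀ one_le_two hd.ne'
  rw [mul_comm k d, pow_mul, mul_pow, one_div, Real.rpow_inv_natCast_pow n.cast_nonneg hd.ne']
  gcongr
  nlinarith

lemma two_mul_sqrt_pow_four_le (n : ℕ) (σ ε : ℝ) (hε : 0 ≤ ε) :
    (2 * √(2 * ε * n / (Real.pi * σ ^ 2))) ^ 4 ≤ 16 * ε ^ 2 * n ^ 2 / σ ^ 4 := by
  have hpi : (2 : ℝ) ^ 2 ≤ Real.pi ^ 2 := pow_le_pow_left₀ zero_le_two Real.two_le_pi 2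
  rw [mul_pow, show 4 = 2 * 2 from rfl, pow_mul √_, Real.sq_sqrt (by positivity)]
  calc 2 ^ (2 * 2) * (2 * ε * n / (Real.pi * σ ^ 2)) ^ 2
      = 16 * ε ^ 2 * n ^ 2 / σ ^ 4 * (2 ^ 2 / Real.pi ^ 2) := by field_simp; ring
    _ ≤ 16 * ε ^ 2 * n ^ 2 / σ ^ 4 :=
      mul_le_of_le_one_right (by positivity) ((div_le_one (by positivity)).2 hpi)

lemma net_base_le (hn : 0 < n) (hd : 0 < d) {R ε : ℝ} (hR : 1 ≤ R) (hε : 0 < ε) (hε₁ : ε ≤ 1) :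
    2 * (n * R) * √d / (ε / (12 * R)) + 3 ≤ 27 * n * d * R ^ 2 / ε := by
  have hn₁ : (1 : ℝ) ≤ n := mod_cast hn
  have hd₁ : (1 : ℝ) ≤ d := mod_cast hd
  have hsqrt : √(d : ℝ) ≤ d := (Real.sqrt_le_left d.cast_nonneg).2 (le_self_pow₀ hd₁ two_ne_zero)
  have hbase : 1 ≤ n * d * R ^ 2 / ε := by
    rw [one_le_div hε]
    exact hε₁.trans (one_le_mul_of_one_le_of_one_le (one_le_mul_of_one_le_of_one_le hn₁ hd₁)
      (one_le_pow₀ hR))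
  calc 2 * (n * R) * √d / (ε / (12 * R)) + 3 = 24 * (n * √d * R ^ 2 / ε) + 3 := by
        field_simp
        ring
    _ ≤ 24 * (n * d * R ^ 2 / ε) + 3 * (n * d * R ^ 2 / ε) := by
        gcongr
        linarith
    _ = 27 * n * d * R ^ 2 / ε := by ring

/-- The number `Λ` for which a window of `k ^ (4 * (k * d))` moves that lowers the potential by at
most `ε` exists with probability at most `(Λ * ε) ^ (k * d)`, as long as all points have norm at
most `R`. In `864 = 2 * 27 * 16` the factors come from `add_one_pow_le_two_mul_rpow_pow`,
`net_base_le` and `two_mul_sqrt_pow_four_le`. -/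
def windowRate (n k d : ℕ) (R σ : ℝ) : ℝ :=
  864 * n ^ 7 * (n : ℝ) ^ (1 / (d : ℝ)) * d * R ^ 2 * k ^ (8 * (k * d) + 6) / σ ^ 4

lemma union_bound_le_windowRate_mul_pow (hn : 0 < n) (hd : 0 < d) (k : ℕ) {R ε N : ℝ} (σ : ℝ)
    (hR : 1 ≤ R) (hε : 0 < ε) (hε₁ : ε ≤ 1) (hN₀ : 0 ≤ N)
    (hN : N ≤ (2 * (n * R) * √d / (ε / (12 * R)) + 3) ^ d) :
    (n : ℝ) ^ (4 * (k * d)) * k ^ (4 * (k * d)) * (n + 1) ^ k * N ^ k *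
        k ^ (∑ j : Fin (4 * (k * d)), ((j : ℕ) + 1)) *
        (2 * √(2 * ε * n / (Real.pi * σ ^ 2))) ^ (4 * (k * d)) ≤
      (windowRate n k d R σ * ε) ^ (k * d) := by
  have hnet : N ^ k ≤ (27 * n * d * R ^ 2 / ε) ^ (k * d) := by
    rw [mul_comm k d, pow_mul]
    exact pow_le_pow_left₀ hN₀ (hN.trans
      (pow_le_pow_left₀ (by positivity) (net_base_le hn hd hR hε hε₁) d)) k
  rw [sum_fin_four_mul_val_add_one, pow_mul (n : ℝ), pow_mul (k : ℝ) 4,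
    pow_mul (k : ℝ) (8 * (k * d) + 2), pow_mul _ 4 (k * d)]
  calc _ ≤ ((n : ℝ) ^ 4) ^ (k * d) * ((k : ℝ) ^ 4) ^ (k * d) *
        (2 * (n : ℝ) ^ (1 / (d : ℝ))) ^ (k * d) * (27 * n * d * R ^ 2 / ε) ^ (k * d) *
        ((k : ℝ) ^ (8 * (k * d) + 2)) ^ (k * d) * (16 * ε ^ 2 * n ^ 2 / σ ^ 4) ^ (k * d) := by
        gcongr
        · exact add_one_pow_le_two_mul_rpow_pow hn hd k
        · exact two_mul_sqrt_pow_four_le n σ ε hε.le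
    _ = (windowRate n k d R σ * ε) ^ (k * d) := by
        simp only [← mul_pow, windowRate]
        congr 1
        field_simp
        ring

lemma exists_event_maxImprovingSeqLen_le (hn : 0 < n) (hk : 0 < k) (hd : 0 < d)
    (Y : Fin n → Fin d → ℝ) {σ R ε : ℝ} (hσ : 0 < σ) (hR : 1 ≤ R) (hε : 0 < ε) (hε₁ : ε ≤ 1) :
    ∃ E : Set (Fin n → Fin d → ℝ), MeasurableSet E ∧
      perturbedPoints n d Y σ E ≤ ENNReal.ofReal ((windowRate n k d R σ * ε) ^ (k * d)) ∧
      ∀ ω ∉ E, (∀ i, ‖toEuc (ω i)‖ ≤ R) →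
        (maxImprovingSeqLen n k d (fun i ↦ toEuc (ω i)) : ℝ) ≤
          k ^ (4 * (k * d)) * (1 + n * R ^ 2 / ε) := by
  have : 0 < R := zero_lt_one.trans_le hR
  have hδ : ε / (12 * R) ≤ R :=
    ((div_le_one (by positivity)).2 (by linarith)).trans hR
  obtain ⟨A, hA, hcard⟩ := exists_finset_net hd (r := n * R) (by positivity)
    (show 0 < ε / (12 * R) by positivity)
  refine ⟨{ω | SmallGainWindow k (4 * (k * d)) A (2 * ε) fun i ↦ toEuc (ω i)},
    measurableSet_smallGainWindow A _, ?_, fun ω hω hX ↦ ?_⟩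
  · exact (perturbedPoints_smallGainWindow_le hd Y hσ A (by positivity)).trans <|
      ENNReal.ofReal_le_ofReal <| union_bound_le_windowRate_mul_pow hn hd k σ hR hε hε₁
        (Nat.cast_nonneg _) hcard
  · refine maxImprovingSeqLen_le_of_not_smallGainWindow hk hX hδ hε hA ?_
    rwa [show ε + 12 * (ε / (12 * R)) * R = 2 * ε by field_simp; ring]

instance (n d : ℕ) (Y : Fin n → Fin d → ℝ) (σ : ℝ) :
    IsProbabilityMeasure (perturbedPoints n d Y σ) := by
  unfold perturbedPoints
  infer_instance

lemma perturbedPoints_lt_abs_le {Y : Fin n → Fin d → ℝ} (hY : ∀ i j, |Y i j| ≤ 1) {σ s : ℝ}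
    (hσ : 0 < σ) (hσ₁ : σ ≤ 1) (hs : 0 ≤ s) (i : Fin n) (j : Fin d) :
    perturbedPoints n d Y σ {ω | 1 + s < |ω i j|} ≤
      ENNReal.ofReal (2 * Real.exp (-s ^ 2 / 2)) := by
  refine pi_le_of_forall_update_le _ i (measurableSet_lt (by fun_prop) (by fun_prop)) fun ω ↦ ?_
  simp only [Set.mem_ofPred_eq, Function.update_self]
  refine pi_le_of_forall_update_le _ j (measurableSet_lt (by fun_prop) (by fun_prop)) fun x ↦ ?_
  simp only [Set.mem_ofPred_eq, Function.update_self]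
  calc gaussianReal (Y i j) (σ ^ 2).toNNReal {y | 1 + s < |y|}
      ≤ gaussianReal (Y i j) (σ ^ 2).toNNReal {y | |Y i j| + s < |y|} :=
        measure_mono fun y hy ↦ ((add_le_add_left (hY i j) s).trans_lt hy :)
    _ ≤ ENNReal.ofReal (2 * Real.exp (-s ^ 2 / (2 * σ ^ 2))) :=
        (gaussianReal_abs_add_lt_abs_le (Y i j) (σ ^ 2).toNNReal hs).trans_eq <| by
          rw [Real.coe_toNNReal _ (sq_nonneg σ)]
    _ ≤ ENNReal.ofReal (2 * Real.exp (-s ^ 2 / 2)) := by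
        simp only [neg_div]
        gcongr
        exact mul_le_of_le_one_right zero_le_two (pow_le_one₀ hσ.le hσ₁)

lemma perturbedPoints_exists_lt_norm_le {Y : Fin n → Fin d → ℝ} (hY : ∀ i j, |Y i j| ≤ 1)
    {σ s : ℝ} (hσ : 0 < σ) (hσ₁ : σ ≤ 1) (hs : 0 ≤ s) :
    perturbedPoints n d Y σ {ω | ∀ i, ‖toEuc (ω i)‖ ≤ √d * (1 + s)}ᶜ ≤
      ENNReal.ofReal (n * d * (2 * Real.exp (-s ^ 2 / 2))) := by
  have hcoord : {ω : Fin n → Fin d → ℝ | ∀ i, ‖toEuc (ω i)‖ ≤ √d * (1 + s)}ᶜ ⊆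
      ⋃ ij : Fin n × Fin d, {ω | 1 + s < |ω ij.1 ij.2|} := by
    rw [Set.compl_subset_comm]
    intro ω hω i
    simp only [Set.mem_compl_iff, Set.mem_iUnion, Set.mem_ofPred_eq, not_exists, not_lt] at hω
    exact norm_le_sqrt_mul_of_forall_abs_le _ (by linarith) fun j ↦ hω (i, j)
  calc perturbedPoints n d Y σ {ω | ∀ i, ‖toEuc (ω i)‖ ≤ √d * (1 + s)}ᶜ
      ≤ ∑ ij : Fin n × Fin d, perturbedPoints n d Y σ {ω | 1 + s < |ω ij.1 ij.2|} :=
        (measure_mono hcoord).trans (measure_iUnion_fintype_le _ _)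
    _ ≤ Fintype.card (Fin n × Fin d) • ENNReal.ofReal (2 * Real.exp (-s ^ 2 / 2)) :=
        Finset.sum_le_card_nsmul _ _ _ fun ij _ ↦
          perturbedPoints_lt_abs_le hY hσ hσ₁ hs ij.1 ij.2
    _ = ENNReal.ofReal (n * d * (2 * Real.exp (-s ^ 2 / 2))) := by
        rw [nsmul_eq_mul, Fintype.card_prod, Fintype.card_fin, Fintype.card_fin,
          ← ENNReal.ofReal_natCast, ← ENNReal.ofReal_mul (by positivity), Nat.cast_mul]

/-- The radius of a ball around the origin that contains all perturbed points, except with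
probability at most `k ^ (-n)`. -/
def truncationRadius (n k d : ℕ) : ℝ :=
  √d * (1 + 2 * √(n * Real.log (n * k * d)))

lemma pow_mul_exp_truncation_le_one (hn : 0 < n) (hk : 2 ≤ k) (hd : 0 < d) :
    (k : ℝ) ^ n * (n * d * (2 * Real.exp (-(2 * √(n * Real.log (n * k * d))) ^ 2 / 2))) ≤ 1 := by
  have hn₁ : (1 : ℝ) ≤ n := mod_cast hn
  have hd₁ : (1 : ℝ) ≤ d := mod_cast hd
  have hk₂ : (2 : ℝ) ≤ k := mod_cast hk
  have hnd : 1 ≤ (n : ℝ) * d := one_le_mul_of_one_le_of_one_le hn₁ hd₁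
  set x : ℝ := n * k * d
  have hkx : (k : ℝ) ≤ x := by nlinarith
  have hndx : 2 * ((n : ℝ) * d) ≤ x := by nlinarith
  have hx₁ : 1 ≤ x := by linarith
  have hexp : Real.exp (-(2 * √(n * Real.log x)) ^ 2 / 2) = (x ^ (n + n))⁻¹ := by
    rw [mul_pow, Real.sq_sqrt (mul_nonneg n.cast_nonneg (Real.log_nonneg hx₁)),
      show -(2 ^ 2 * (n * Real.log x)) / 2 = -((n + n : ℕ) * Real.log x) by push_cast; ring,
      Real.exp_neg, Real.exp_nat_mul, Real.exp_log (by linarith)]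
  calc (k : ℝ) ^ n * (n * d * (2 * Real.exp (-(2 * √(n * Real.log x)) ^ 2 / 2)))
      = (k : ℝ) ^ n * (2 * (n * d)) / x ^ (n + n) := by rw [hexp]; ring
    _ ≤ x ^ n * x ^ n / x ^ (n + n) := by
        gcongr
        exact hndx.trans (le_self_pow₀ hx₁ hn.ne')
    _ = 1 := by rw [← pow_add, div_self (by positivity)]

lemma measurableSet_forall_norm_le (n d : ℕ) (R : ℝ) :
    MeasurableSet {ω : Fin n → Fin d → ℝ | ∀ i, ‖toEuc (ω i)‖ ≤ R} := by
  simp only [Set.ofPred_forall]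
  exact .iInter fun i ↦ measurableSet_le
    ((continuous_toEuc.comp (continuous_apply i)).norm.measurable) measurable_const

lemma pow_mul_perturbedPoints_truncation_le_one (hn : 0 < n) (hk : 2 ≤ k) (hd : 0 < d)
    {Y : Fin n → Fin d → ℝ} (hY : ∀ i j, |Y i j| ≤ 1) {σ : ℝ} (hσ : 0 < σ) (hσ₁ : σ ≤ 1) :
    (k : ENNReal) ^ n *
      perturbedPoints n d Y σ {ω | ∀ i, ‖toEuc (ω i)‖ ≤ truncationRadius n k d}ᶜ ≤ 1 := by
  calc _ ≤ (k : ENNReal) ^ n * ENNReal.ofReal (n * d *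
          (2 * Real.exp (-(2 * √(n * Real.log (n * k * d))) ^ 2 / 2))) := by
        gcongr
        exact perturbedPoints_exists_lt_norm_le hY hσ hσ₁ (by positivity)
    _ ≤ 1 := by
        rw [← ENNReal.ofReal_natCast, ← ENNReal.ofReal_pow k.cast_nonneg,
          ← ENNReal.ofReal_mul (by positivity), ENNReal.ofReal_le_one]
        exact pow_mul_exp_truncation_le_one hn hk hd

lemma one_le_windowRate (hn : 0 < n) (hk : 0 < k) (hd : 0 < d) {R σ : ℝ} (hR : 1 ≤ R)
    (hσ : 0 < σ) (hσ₁ : σ ≤ 1) : 1 ≤ windowRate n k d R σ := by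
  have hn₁ : (1 : ℝ) ≤ n := mod_cast hn
  have hd₁ : (1 : ℝ) ≤ d := mod_cast hd
  have hk₁ : (1 : ℝ) ≤ k := mod_cast hk
  have hroot : 1 ≤ (n : ℝ) ^ (1 / (d : ℝ)) := Real.one_le_rpow hn₁ (by positivity)
  rw [windowRate, one_le_div (by positivity)]
  calc σ ^ 4 ≤ 1 * 1 ^ 7 * 1 * 1 * 1 ^ 2 * 1 ^ (8 * (k * d) + 6) := by
        simpa using pow_le_one₀ hσ.le hσ₁
    _ ≤ 864 * n ^ 7 * (n : ℝ) ^ (1 / (d : ℝ)) * d * R ^ 2 * k ^ (8 * (k * d) + 6) := by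
        gcongr
        norm_num

/-- The order of magnitude of the expected length of an improving sequence when all points have
norm at most `R`: the window length times the largest potential times `windowRate`. -/
def expectedLengthScale (n k d : ℕ) (R σ : ℝ) : ℝ :=
  k ^ (4 * (k * d)) * (n * R ^ 2) * windowRate n k d R σ

lemma pow_le_expectedLengthScale (hn : 0 < n) (hk : 0 < k) (hd : 0 < d) {R σ : ℝ}
    (hR : 1 ≤ R) (hσ : 0 < σ) (hσ₁ : σ ≤ 1) :
    (k : ℝ) ^ (4 * (k * d)) ≤ expectedLengthScale n k d R σ := by
  have hn₁ : (1 : ℝ) ≤ n := mod_cast hn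
  rw [expectedLengthScale, mul_assoc]
  exact le_mul_of_one_le_right (by positivity) (one_le_mul_of_one_le_of_one_le
    (one_le_mul_of_one_le_of_one_le hn₁ (one_le_pow₀ hR)) (one_le_windowRate hn hk hd hR hσ hσ₁))

lemma window_bound_le_expectedLengthScale (hn : 0 < n) (hk : 0 < k) (hd : 0 < d) {R σ : ℝ}
    (hR : 1 ≤ R) (hσ : 0 < σ) (hσ₁ : σ ≤ 1) (l : ℕ) :
    (k : ℝ) ^ (4 * (k * d)) * (1 + n * R ^ 2 / (2⁻¹ ^ l / windowRate n k d R σ)) ≤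
      2 * expectedLengthScale n k d R σ * 2 ^ l := by
  set Z := expectedLengthScale n k d R σ with hZ
  have hpowZ : (k : ℝ) ^ (4 * (k * d)) ≤ Z := pow_le_expectedLengthScale hn hk hd hR hσ hσ₁
  calc (k : ℝ) ^ (4 * (k * d)) * (1 + n * R ^ 2 / (2⁻¹ ^ l / windowRate n k d R σ))
      = (k : ℝ) ^ (4 * (k * d)) + Z * 2 ^ l := by
        rw [hZ, expectedLengthScale, inv_pow, div_div_eq_mul_div, div_inv_eq_mul]
        ring
    _ ≤ Z * 2 ^ l + Z * 2 ^ l := by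
        gcongr
        exact hpowZ.trans (le_mul_of_one_le_right ((by positivity : (0 : ℝ) ≤ _).trans hpowZ)
          (one_le_pow₀ one_le_two))
    _ = 2 * Z * 2 ^ l := by ring

lemma ofReal_inv_two_pow_pow_le {D : ℕ} (hD : 2 ≤ D) (l : ℕ) :
    ENNReal.ofReal ((2⁻¹ ^ l) ^ D) ≤ 4⁻¹ ^ l := by
  calc ENNReal.ofReal ((2⁻¹ ^ l) ^ D) ≤ ENNReal.ofReal ((2⁻¹ ^ l) ^ 2) :=
        ENNReal.ofReal_le_ofReal <| pow_le_pow_of_le_one (by positivity)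
          (pow_le_one₀ (by norm_num) (by norm_num)) hD
    _ = ENNReal.ofReal ((4⁻¹ : ℝ) ^ l) := by rw [← pow_mul, mul_comm, pow_mul]; norm_num
    _ = 4⁻¹ ^ l := by
        rw [ENNReal.ofReal_pow (by norm_num), ENNReal.ofReal_inv_of_pos four_pos,
          ENNReal.ofReal_ofNat]

lemma lintegral_indicator_maxImprovingSeqLen_le (hn : 0 < n) (hk : 2 ≤ k) (hd : 0 < d)
    (Y : Fin n → Fin d → ℝ) {R σ : ℝ} (hR : 1 ≤ R) (hσ : 0 < σ) (hσ₁ : σ ≤ 1) :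
    ∫⁻ ω, {ω : Fin n → Fin d → ℝ | ∀ i, ‖toEuc (ω i)‖ ≤ R}.indicator
        (fun ω ↦ (maxImprovingSeqLen n k d fun i ↦ toEuc (ω i) : ENNReal)) ω
        ∂(perturbedPoints n d Y σ) ≤
      ENNReal.ofReal (10 * expectedLengthScale n k d R σ) := by
  have hΛ := one_le_windowRate hn (by omega : 0 < k) hd hR hσ hσ₁
  set Λ := windowRate n k d R σ
  have hΛ₀ : 0 < Λ := by linarith
  have hε₁ (l : ℕ) : 2⁻¹ ^ l / Λ ≤ 1 :=
    (div_le_one hΛ₀).2 ((pow_le_one₀ (by norm_num) (by norm_num)).trans hΛ)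
  choose E hE hμE hTE using fun l : ℕ ↦ exists_event_maxImprovingSeqLen_le hn (by omega : 0 < k)
    hd Y hσ hR (show 0 < 2⁻¹ ^ l / Λ by positivity) (hε₁ l)
  set Z := expectedLengthScale n k d R σ with hZ
  have hZ₀ : 0 < Z := by rw [hZ, expectedLengthScale]; positivity
  refine (lintegral_le_of_dyadic (c := ENNReal.ofReal (2 * Z)) hE (by simpa using hZ₀)
    (fun ω ↦ ?_) (fun l ω hω ↦ ?_) fun l ↦ (hμE l).trans ?_).trans_eq ?_
  · rw [Set.indicator_apply]
    split_ifs <;> simp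
  · refine Set.indicator_apply_le' (fun hX ↦ ?_) fun _ ↦ zero_le
    have hT := (hTE l ω hω hX).trans
      (window_bound_le_expectedLengthScale hn (by omega) hd hR hσ hσ₁ l)
    rw [← ENNReal.ofReal_natCast]
    refine (ENNReal.ofReal_le_ofReal hT).trans_eq ?_
    rw [ENNReal.ofReal_mul (by positivity), ENNReal.ofReal_pow zero_le_two, ENNReal.ofReal_ofNat]
  · rw [mul_div_cancel₀ _ hΛ₀.ne']
    exact ofReal_inv_two_pow_pow_le (hk.trans (Nat.le_mul_of_pos_right k hd)) l
  · rw [← ENNReal.ofReal_ofNat 5, ← ENNReal.ofReal_mul (by norm_num)]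
    ring_nf

lemma one_le_truncationRadius (n k : ℕ) (hd : 0 < d) : 1 ≤ truncationRadius n k d := by
  refine one_le_mul_of_one_le_of_one_le (Real.one_le_sqrt.2 (mod_cast hd)) ?_
  exact le_add_of_nonneg_right (by positivity)

lemma truncationRadius_sq_le (hn : 0 < n) (hk : 2 ≤ k) (hd : 0 < d) :
    truncationRadius n k d ^ 2 ≤ 12 * d * (n * Real.log (n * k * d)) := by
  have hn₁ : (1 : ℝ) ≤ n := mod_cast hn
  have hnkd : (2 : ℝ) ≤ n * k * d := by
    exact_mod_cast hk.trans (Nat.le_mul_of_pos_left k hn |>.trans (Nat.le_mul_of_pos_right _ hd))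
  have hlog : 1 / 2 ≤ Real.log (n * k * d) := by
    linarith [Real.log_le_log two_pos hnkd, Real.log_two_gt_d9]
  have hx : 1 / 2 ≤ n * Real.log (n * k * d) := by nlinarith
  set x := n * Real.log (n * k * d)
  calc truncationRadius n k d ^ 2 = d * (1 + 2 * √x) ^ 2 := by
        rw [truncationRadius, mul_pow, Real.sq_sqrt d.cast_nonneg]
    _ ≤ d * (2 * (1 ^ 2 + (2 * √x) ^ 2)) := by
        gcongr
        exact add_sq_le
    _ = d * (2 + 8 * x) := by
        rw [mul_pow, Real.sq_sqrt (by linarith)]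
        ring
    _ ≤ 12 * d * x := by nlinarith [(d.cast_nonneg : (0 : ℝ) ≤ d)]

lemma expectedLengthScale_truncationRadius_le (hn : 0 < n) (hk : 2 ≤ k) (hd : 0 < d) (σ : ℝ) :
    expectedLengthScale n k d (truncationRadius n k d) σ ≤
      124416 * k ^ (12 * k * d + 6) * d ^ 3 * (n : ℝ) ^ (10 + 1 / (d : ℝ)) *
        Real.log (n * k * d) ^ 2 / σ ^ 4 := by
  have hn₀ : (0 : ℝ) < n := mod_cast hn
  have hR := truncationRadius_sq_le hn hk hd
  calc expectedLengthScale n k d (truncationRadius n k d) σ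
      = 864 * k ^ (12 * k * d + 6) * d * (n ^ 8 * (n : ℝ) ^ (1 / (d : ℝ))) *
          (truncationRadius n k d ^ 2) ^ 2 / σ ^ 4 := by
        rw [expectedLengthScale, windowRate]
        ring
    _ ≤ 864 * k ^ (12 * k * d + 6) * d * (n ^ 8 * (n : ℝ) ^ (1 / (d : ℝ))) *
          (12 * d * (n * Real.log (n * k * d))) ^ 2 / σ ^ 4 := by gcongr
    _ = 124416 * k ^ (12 * k * d + 6) * d ^ 3 * (n : ℝ) ^ (10 + 1 / (d : ℝ)) *
          Real.log (n * k * d) ^ 2 / σ ^ 4 := by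
        rw [Real.rpow_add hn₀, ← Nat.cast_ofNat (R := ℝ) (n := 10), Real.rpow_natCast]
        ring

lemma lintegral_maxImprovingSeqLen_le_expectedLengthScale (hn : 0 < n) (hk : 2 ≤ k) (hd : 0 < d)
    {Y : Fin n → Fin d → ℝ} (hY : ∀ i j, |Y i j| ≤ 1) {σ : ℝ} (hσ : 0 < σ) (hσ₁ : σ ≤ 1) :
    ∫⁻ ω, (maxImprovingSeqLen n k d fun i ↦ toEuc (ω i) : ENNReal) ∂(perturbedPoints n d Y σ) ≤
      ENNReal.ofReal (11 * expectedLengthScale n k d (truncationRadius n k d) σ) := by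
  have hR := one_le_truncationRadius n k hd
  set R := truncationRadius n k d
  set B := {ω : Fin n → Fin d → ℝ | ∀ i, ‖toEuc (ω i)‖ ≤ R}
  set T : (Fin n → Fin d → ℝ) → ENNReal := fun ω ↦ maxImprovingSeqLen n k d fun i ↦ toEuc (ω i)
  have hscale : 1 ≤ expectedLengthScale n k d R σ :=
    (one_le_pow₀ (mod_cast (by omega : 1 ≤ k))).trans
      (pow_le_expectedLengthScale hn (by omega) hd hR hσ hσ₁)
  have hT (ω) : T ω ≤ k ^ n := by
    rw [← Nat.cast_pow]
    exact Nat.cast_le.2 (maxImprovingSeqLen_lt_pow (by omega) _).le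
  have hB : MeasurableSet B := measurableSet_forall_norm_le n d R
  have hsplit (ω) : T ω ≤ Bᶜ.indicator (fun _ ↦ (k : ENNReal) ^ n) ω + B.indicator T ω := by
    by_cases hω : ω ∈ B <;> simp [hω, hT]
  calc ∫⁻ ω, T ω ∂(perturbedPoints n d Y σ)
      ≤ k ^ n * perturbedPoints n d Y σ Bᶜ + ∫⁻ ω, B.indicator T ω ∂(perturbedPoints n d Y σ) := by
        refine (lintegral_mono hsplit).trans_eq ?_
        rw [lintegral_add_left (measurable_const.indicator hB.compl),
          lintegral_indicator_const hB.compl]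
    _ ≤ 1 + ENNReal.ofReal (10 * expectedLengthScale n k d R σ) := by
        gcongr
        · exact pow_mul_perturbedPoints_truncation_le_one hn hk hd hY hσ hσ₁
        · exact lintegral_indicator_maxImprovingSeqLen_le hn hk hd Y hR hσ hσ₁
    _ = ENNReal.ofReal (1 + 10 * expectedLengthScale n k d R σ) := by
        rw [ENNReal.ofReal_add zero_le_one (by linarith), ENNReal.ofReal_one]
    _ ≤ ENNReal.ofReal (11 * expectedLengthScale n k d R σ) :=
        ENNReal.ofReal_le_ofReal (by linarith)

lemma general_bound_le_paper_bound (hk : 0 < k) (hd : 0 < d) (hn : 4 * k * d ≤ n) (σ : ℝ) :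
    (k : ℝ) ^ (12 * k * d + 6) * d ^ 3 * (n : ℝ) ^ (10 + 1 / (d : ℝ)) *
        Real.log (n * k * d) ^ 2 / σ ^ 4 ≤
      (k : ℝ) ^ (12 * k * d + 5) * d ^ 12 * (n : ℝ) ^ ((12.5 : ℝ) + 1 / (d : ℝ)) *
        Real.log (n * k * d) ^ (4.5 : ℝ) / σ ^ 4 := by
  have hkd : 0 < k * d := Nat.mul_pos hk hd
  have hn₁ : (1 : ℝ) ≤ n := mod_cast (by nlinarith : 1 ≤ n)
  have hd₁ : (1 : ℝ) ≤ d := mod_cast hd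
  have hkn : (k : ℝ) ≤ n := mod_cast (by nlinarith : k ≤ n)
  have hnkd : (4 : ℝ) ≤ n * k * d := mod_cast (by nlinarith : 4 ≤ n * k * d)
  have hlog : 1 ≤ Real.log (n * k * d) := by
    rw [Real.le_log_iff_exp_le (by linarith)]
    linarith [Real.exp_one_lt_d9]
  set L := Real.log (n * k * d)
  have hpow : (k : ℝ) * (n : ℝ) ^ (10 + 1 / (d : ℝ)) ≤ (n : ℝ) ^ ((12.5 : ℝ) + 1 / (d : ℝ)) := by
    calc (k : ℝ) * (n : ℝ) ^ (10 + 1 / (d : ℝ)) ≤ n * (n : ℝ) ^ (10 + 1 / (d : ℝ)) := by gcongr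
      _ = (n : ℝ) ^ (1 + (10 + 1 / (d : ℝ))) :=
        (Real.rpow_one_add' n.cast_nonneg (by positivity)).symm
      _ ≤ (n : ℝ) ^ ((12.5 : ℝ) + 1 / (d : ℝ)) :=
        Real.rpow_le_rpow_of_exponent_le hn₁ (by linarith)
  have hL : L ^ 2 ≤ L ^ (4.5 : ℝ) := by
    rw [← Real.rpow_natCast]
    exact Real.rpow_le_rpow_of_exponent_le hlog (by norm_num)
  calc _ = (k : ℝ) ^ (12 * k * d + 5) * d ^ 3 * (k * (n : ℝ) ^ (10 + 1 / (d : ℝ))) * L ^ 2 /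
        σ ^ 4 := by ring
    _ ≤ _ := by gcongr; norm_num

end

end HartiganWong

theorem hartigan_wong_smoothed_complexity_general (n k d : ℕ) (hk : 0 < k) (hd : 0 < d)
    (Y : Fin n → Fin d → ℝ) (hY : ∀ i j, |Y i j| ≤ 1) (σ : ℝ) (hσ : 0 < σ) (hσ₁ : σ ≤ 1) :
    ∫⁻ ω, (maxImprovingSeqLen n k d (fun i => toEuc (ω i)) : ENNReal)
        ∂(perturbedPoints n d Y σ) ≤
      ENNReal.ofReal (1368576 * (k : ℝ) ^ (12 * k * d + 6) * (d : ℝ) ^ 3 *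
        (n : ℝ) ^ (10 + 1 / (d : ℝ)) * Real.log ((n : ℝ) * k * d) ^ 2 / σ ^ 4) := by
  by_cases hdeg : n = 0 ∨ k = 1
  · have hT (X) : maxImprovingSeqLen n k d X = 0 := by
      have hpow : k ^ n = 1 := by rcases hdeg with rfl | rfl <;> simp
      exact Nat.lt_one_iff.1 (hpow ▸ HartiganWong.maxImprovingSeqLen_lt_pow hk X)
    simp [hT]
  obtain ⟨hn, hk₂⟩ : 0 < n ∧ 2 ≤ k := by omega
  refine (HartiganWong.lintegral_maxImprovingSeqLen_le_expectedLengthScale hn hk₂ hd hY hσ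
    hσ₁).trans (ENNReal.ofReal_le_ofReal ?_)
  calc _ ≤ 11 * (124416 * (k : ℝ) ^ (12 * k * d + 6) * d ^ 3 * (n : ℝ) ^ (10 + 1 / (d : ℝ)) *
        Real.log (n * k * d) ^ 2 / σ ^ 4) := by
        gcongr
        exact HartiganWong.expectedLengthScale_truncationRadius_le hn hk₂ hd σ
    _ = _ := by ring

/-- Let `4kd ≤ n`, let `Y` be `n` points in `[0,1]^d`, and let `X` be
obtained by independent Gaussian perturbations of mean `0` and standard deviation `σ ≤ 1`.
Then `E[T(X)] = O(k^(12kd+5) · d^12 · n^(12.5+1/d) · ln^{4.5}(nkd) / σ⁴)`, where `T(X)` is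
the maximum length of an improving sequence of single-point reassignments; in particular this
bounds the expected running time of the Hartigan--Wong method under any pivot rule. -/
theorem hartigan_wong_smoothed_complexity :
    ∃ c : ℝ, 0 < c ∧
      ∀ (n k d : ℕ), 0 < k → 0 < d → 4 * k * d ≤ n →
        ∀ (Y : Fin n → Fin d → ℝ), (∀ i j, Y i j ∈ Set.Icc (0 : ℝ) 1) →
          ∀ σ : ℝ, 0 < σ → σ ≤ 1 →
            ∫⁻ ω, (maxImprovingSeqLen n k d (fun i => toEuc (ω i)) : ENNReal)
                ∂(perturbedPoints n d Y σ)
              ≤ ENNReal.ofReal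
                  (c * (k : ℝ) ^ (12 * k * d + 5) * (d : ℝ) ^ 12
                    * (n : ℝ) ^ ((12.5 : ℝ) + 1 / (d : ℝ))
                    * Real.log ((n : ℝ) * k * d) ^ ((4.5 : ℝ)) / σ ^ 4) := by
  refine ⟨1368576, by norm_num, fun n k d hk hd hn Y hY σ hσ hσ₁ ↦ ?_⟩
  have hY₁ (i j) : |Y i j| ≤ 1 := (abs_of_nonneg (hY i j).1).trans_le (hY i j).2
  refine (hartigan_wong_smoothed_complexity_general n k d hk hd Y hY₁ σ hσ hσ₁).trans
    (ENNReal.ofReal_le_ofReal ?_)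
  simpa only [mul_assoc, mul_div_assoc] using mul_le_mul_of_nonneg_left
    (HartiganWong.general_bound_le_paper_bound hk hd hn σ) (by norm_num : (0 : ℝ) ≤ 1368576)
end

section
/- Let S and T be two disjoint nonempty finite sets of points in ℝ^d with |S| > 1, and let x ∈ S. Then Φ(S \ {x}) + Φ(T ∪ {x}) − Φ(T) − Φ(S) = (|T|/(|T| + 1)) · ‖cm(T) − x‖² − (|S|/(|S| − 1)) · ‖cm(S) − x‖². -/
/-- The center of mass of a finite set of points in `ℝ^d`. -/
noncomputable def centerOfMass {d : ℕ} (S : Finset (EuclideanSpace ℝ (Fin d))) :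
    EuclideanSpace ℝ (Fin d) :=
  (S.card : ℝ)⁻¹ • ∑ x ∈ S, x

/-- The `k`-means potential of a single cluster: `Φ(S) = Σ_{x ∈ S} ‖x − cm(S)‖²`
(with `Φ(∅) = 0`). -/
noncomputable def clusterPot {d : ℕ} (S : Finset (EuclideanSpace ℝ (Fin d))) : ℝ :=
  ∑ x ∈ S, ‖x - centerOfMass S‖ ^ 2

noncomputable instance {d : ℕ} : DecidableEq (EuclideanSpace ℝ (Fin d)) := Classical.decEq _

/-!
By the parallel axis identity, the second moment of a cluster about a point `q` is its potential
plus its total weight times the squared distance from `q` to its center of mass. Adding the point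
`x` to a cluster does not change the second moment about `x`, and it scales the vector from `x`
to the center of mass by a factor that depends only on the weights. Comparing the two decompositions
of the moment about `x` gives the change of potential.
-/

section WeightedPoints

open Finset

theorem sum_smul_sub_centerMass {𝕜 ι E : Type*} [Field 𝕜] [AddCommGroup E] [Module 𝕜 E]
    {s : Finset ι} {w : ι → 𝕜} (p : ι → E) (hw : ∑ i ∈ s, w i ≠ 0) :
    ∑ i ∈ s, w i • (p i - s.centerMass w p) = 0 := by
  simp only [smul_sub, sum_sub_distrib, ← sum_smul]
  rw [centerMass, smul_inv_smul₀ hw, sub_self]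

theorem centerMass_insert_sub {𝕜 ι E : Type*} [Field 𝕜] [AddCommGroup E] [Module 𝕜 E]
    [DecidableEq ι] {s : Finset ι} {w : ι → 𝕜} (p : ι → E) {j : ι} (hj : j ∉ s)
    (hw : ∑ i ∈ s, w i ≠ 0) (hwj : ∑ i ∈ s, w i + w j ≠ 0) :
    (insert j s).centerMass w p - p j =
      ((∑ i ∈ s, w i) / (∑ i ∈ s, w i + w j)) • (s.centerMass w p - p j) := by
  rw [centerMass_insert j s p hj hw, add_comm (w j)]
  match_scalars <;> field_simp
  ring

variable {ι E : Type*} [NormedAddCommGroup E] [InnerProductSpace ℝ E]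

/-- The potential `∑ wᵢ ‖pᵢ - c‖²` of a finite family of points `p` with weights `w`, where `c` is
its center of mass. The weights are arbitrary reals; the notion is meaningful only where their sum
is nonzero, since `Finset.centerMass` divides by it. -/
noncomputable def weightedPot (s : Finset ι) (w : ι → ℝ) (p : ι → E) : ℝ :=
  ∑ i ∈ s, w i * ‖p i - s.centerMass w p‖ ^ 2

theorem sum_mul_norm_sub_sq_eq_weightedPot_add {s : Finset ι} {w : ι → ℝ} (p : ι → E)
    (hw : ∑ i ∈ s, w i ≠ 0) (q : E) :
    ∑ i ∈ s, w i * ‖p i - q‖ ^ 2 =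
      weightedPot s w p + (∑ i ∈ s, w i) * ‖s.centerMass w p - q‖ ^ 2 := by
  set c := s.centerMass w p
  have cross_term : ∑ i ∈ s, w i * inner ℝ (p i - c) (c - q) = 0 := by
    simp only [← real_inner_smul_left, ← sum_inner]
    rw [sum_smul_sub_centerMass p hw, inner_zero_left]
  calc ∑ i ∈ s, w i * ‖p i - q‖ ^ 2
      = ∑ i ∈ s, (w i * ‖p i - c‖ ^ 2 + 2 * (w i * inner ℝ (p i - c) (c - q))
          + w i * ‖c - q‖ ^ 2) := by
        refine sum_congr rfl fun i _ ↦ ?_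
        rw [← sub_add_sub_cancel (p i) c q, norm_add_sq_real]
        ring
    _ = weightedPot s w p + (∑ i ∈ s, w i) * ‖c - q‖ ^ 2 := by
        rw [sum_add_distrib, sum_add_distrib, ← mul_sum, cross_term, ← sum_mul, weightedPot]
        ring

variable [DecidableEq ι] {s t : Finset ι} {w : ι → ℝ} (p : ι → E) {j : ι}

theorem norm_centerMass_insert_sub_sq (hj : j ∉ s) (hw : ∑ i ∈ s, w i ≠ 0)
    (hwj : ∑ i ∈ s, w i + w j ≠ 0) :
    ‖(insert j s).centerMass w p - p j‖ ^ 2 =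
      ((∑ i ∈ s, w i) / (∑ i ∈ s, w i + w j)) ^ 2 * ‖s.centerMass w p - p j‖ ^ 2 := by
  rw [centerMass_insert_sub p hj hw hwj, norm_smul, mul_pow, Real.norm_eq_abs, sq_abs]

theorem weightedPot_insert (hj : j ∉ s) (hw : ∑ i ∈ s, w i ≠ 0)
    (hwj : ∑ i ∈ s, w i + w j ≠ 0) :
    weightedPot (insert j s) w p = weightedPot s w p +
      (∑ i ∈ s, w i) * w j / (∑ i ∈ s, w i + w j) * ‖s.centerMass w p - p j‖ ^ 2 := by
  have sum_weights : ∑ i ∈ insert j s, w i = ∑ i ∈ s, w i + w j := by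
    rw [sum_insert hj, add_comm]
  have moment_insert : ∑ i ∈ insert j s, w i * ‖p i - p j‖ ^ 2 =
      ∑ i ∈ s, w i * ‖p i - p j‖ ^ 2 := by
    simp [sum_insert hj]
  rw [sum_mul_norm_sub_sq_eq_weightedPot_add p (sum_weights ▸ hwj),
    sum_mul_norm_sub_sq_eq_weightedPot_add p hw, sum_weights,
    norm_centerMass_insert_sub_sq p hj hw hwj] at moment_insert
  rw [eq_sub_of_add_eq moment_insert]
  field_simp
  ring

theorem weightedPot_erase (hj : j ∈ s) (hw : ∑ i ∈ s, w i ≠ 0)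
    (hwj : ∑ i ∈ s, w i - w j ≠ 0) :
    weightedPot (s.erase j) w p = weightedPot s w p -
      (∑ i ∈ s, w i) * w j / (∑ i ∈ s, w i - w j) * ‖s.centerMass w p - p j‖ ^ 2 := by
  obtain ⟨r, hjr, rfl⟩ : ∃ r, j ∉ r ∧ insert j r = s :=
    ⟨s.erase j, notMem_erase j s, insert_erase hj⟩
  rw [sum_insert hjr, add_comm] at hw hwj ⊢
  rw [add_sub_cancel_right] at hwj ⊢
  rw [erase_insert hjr, weightedPot_insert p hjr hwj hw,
    norm_centerMass_insert_sub_sq p hjr hwj hw]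
  field_simp
  ring

theorem move_potential_general (hjs : j ∈ s) (hjt : j ∉ t)
    (hs : ∑ i ∈ s, w i ≠ 0) (hsj : ∑ i ∈ s, w i - w j ≠ 0)
    (ht : ∑ i ∈ t, w i ≠ 0) (htj : ∑ i ∈ t, w i + w j ≠ 0) :
    weightedPot (s.erase j) w p + weightedPot (insert j t) w p
        - weightedPot t w p - weightedPot s w p =
      (∑ i ∈ t, w i) * w j / (∑ i ∈ t, w i + w j) * ‖t.centerMass w p - p j‖ ^ 2
        - (∑ i ∈ s, w i) * w j / (∑ i ∈ s, w i - w j) * ‖s.centerMass w p - p j‖ ^ 2 := by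
  rw [weightedPot_erase p hjs hs hsj, weightedPot_insert p hjt ht htj]
  ring

end WeightedPoints

theorem centerOfMass_eq_centerMass {d : ℕ} (S : Finset (EuclideanSpace ℝ (Fin d))) :
    centerOfMass S = S.centerMass (fun _ ↦ (1 : ℝ)) id := by
  simp [centerOfMass, Finset.centerMass]

theorem clusterPot_eq_weightedPot {d : ℕ} (S : Finset (EuclideanSpace ℝ (Fin d))) :
    clusterPot S = weightedPot S (fun _ ↦ 1) id := by
  simp [clusterPot, weightedPot, centerOfMass_eq_centerMass]

/-- For disjoint nonempty finite sets `S, T ⊆ ℝ^d` with `|S| > 1` and `x ∈ S`,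
`Φ(S \ {x}) + Φ(T ∪ {x}) − Φ(T) − Φ(S)
  = (|T|/(|T|+1))·‖cm(T) − x‖² − (|S|/(|S|−1))·‖cm(S) − x‖²`. -/
theorem move_potential {d : ℕ} (S T : Finset (EuclideanSpace ℝ (Fin d)))
    (hST : Disjoint S T) (hS : S.Nonempty) (hT : T.Nonempty) (hScard : 1 < S.card)
    (x : EuclideanSpace ℝ (Fin d)) (hx : x ∈ S) :
    clusterPot (S.erase x) + clusterPot (insert x T) - clusterPot T - clusterPot S
      = (T.card : ℝ) / ((T.card : ℝ) + 1) * ‖centerOfMass T - x‖ ^ 2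
        - (S.card : ℝ) / ((S.card : ℝ) - 1) * ‖centerOfMass S - x‖ ^ 2 := by
  simpa [clusterPot_eq_weightedPot, centerOfMass_eq_centerMass] using
    move_potential_general (w := fun _ ↦ 1) id hx (Finset.disjoint_left.mp hST hx)
      (by simpa using hS.ne_empty) (by simpa [sub_eq_zero] using hScard.ne')
      (by simpa using hT.ne_empty) (by simpa using T.card.cast_add_one_ne_zero)
end

section
/- Let Y be a one-dimensional Gaussian random variable with arbitrary mean and standard deviation σ ≤ 1. Then there is an absolute constant c > 0 such that for every interval I ⊆ ℝ of length ε ≤ 1, the probability that Y² ∈ I is at most c · √ε/σ. -/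
open MeasureTheory ProbabilityTheory

/-!
The Gaussian density is at most `1 / (√(2π) σ)`, so it suffices to bound the Lebesgue measure of the
set where `y² ∈ [a, b]`. That set lies in two intervals of length `√b - √a ≤ √(b - a)`, which gives
the constant `2 / √(2π) = √(2 / π)`. It is optimal: for `μ = 0` and `[a, b] = [0, ε]` the bound is
asymptotically attained as `ε → 0`.
-/

theorem gaussianPDFReal_le_inv_sqrt (μ : ℝ) (v : NNReal) (x : ℝ) :
    gaussianPDFReal μ v x ≤ (√(2 * Real.pi * v))⁻¹ := by
  have exp_le_one : Real.exp (-(x - μ) ^ 2 / (2 * v)) ≤ 1 :=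
    Real.exp_le_one_iff.2 <|
      div_nonpos_of_nonpos_of_nonneg (neg_nonpos.2 (sq_nonneg _)) (by positivity)
  exact mul_le_of_le_one_right (by positivity) exp_le_one

theorem gaussianReal_le_smul_volume (μ : ℝ) {v : NNReal} (hv : v ≠ 0) :
    gaussianReal μ v ≤ ENNReal.ofReal (√(2 * Real.pi * v))⁻¹ • volume := by
  rw [gaussianReal_of_var_ne_zero μ hv, ← withDensity_const]
  exact withDensity_mono <| ae_of_all _ fun x =>
    ENNReal.ofReal_le_ofReal (gaussianPDFReal_le_inv_sqrt μ v x)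

theorem setOf_sq_mem_Icc_subset (a b : ℝ) :
    {y : ℝ | y ^ 2 ∈ Set.Icc a b} ⊆ Set.Icc (√a) (√b) ∪ Set.Icc (-√b) (-√a) := by
  rintro y ⟨ha, hb⟩
  have sqrt_le_abs : √a ≤ |y| := Real.sqrt_sq_eq_abs y ▸ Real.sqrt_le_sqrt ha
  have abs_le_sqrt : |y| ≤ √b := Real.abs_le_sqrt hb
  rcases abs_cases y with ⟨h, -⟩ | ⟨h, -⟩ <;> rw [h] at sqrt_le_abs abs_le_sqrt
  · exact Or.inl ⟨sqrt_le_abs, abs_le_sqrt⟩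
  · exact Or.inr ⟨neg_le.1 abs_le_sqrt, le_neg.1 sqrt_le_abs⟩

theorem sqrt_add_le_add_sqrt (x y : ℝ) : √(x + y) ≤ √x + √y := by
  have le_sq_sqrt (z : ℝ) : z ≤ √z ^ 2 := (Real.sqrt_le_iff.1 le_rfl).2
  refine Real.sqrt_le_iff.2 ⟨by positivity, ?_⟩
  calc x + y ≤ √x ^ 2 + √y ^ 2 := add_le_add (le_sq_sqrt x) (le_sq_sqrt y)
    _ ≤ (√x + √y) ^ 2 := pow_add_pow_le (Real.sqrt_nonneg x) (Real.sqrt_nonneg y) two_ne_zero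

theorem sqrt_sub_sqrt_le_sqrt_sub (x y : ℝ) : √x - √y ≤ √(x - y) := by
  simpa only [sub_le_iff_le_add, sub_add_cancel] using sqrt_add_le_add_sqrt (x - y) y

theorem volume_setOf_sq_mem_Icc_le (a b : ℝ) :
    volume {y : ℝ | y ^ 2 ∈ Set.Icc a b} ≤ ENNReal.ofReal (2 * √(b - a)) :=
  calc volume {y : ℝ | y ^ 2 ∈ Set.Icc a b}
      ≤ volume (Set.Icc (√a) (√b)) + volume (Set.Icc (-√b) (-√a)) :=
        (measure_mono (setOf_sq_mem_Icc_subset a b)).trans (measure_union_le _ _)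
    _ = 2 * ENNReal.ofReal (√b - √a) := by
        rw [Real.volume_Icc, Real.volume_Icc, neg_sub_neg, two_mul]
    _ ≤ 2 * ENNReal.ofReal √(b - a) := by
        gcongr
        exact sqrt_sub_sqrt_le_sqrt_sub b a
    _ = ENNReal.ofReal (2 * √(b - a)) := by
        rw [ENNReal.ofReal_mul zero_le_two, ENNReal.ofReal_ofNat]

theorem squared_gaussian_interval_general (μ : ℝ) {σ : ℝ} (hσ : 0 < σ) (a b : ℝ) :
    gaussianReal μ ((σ ^ 2).toNNReal) {y : ℝ | y ^ 2 ∈ Set.Icc a b}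
      ≤ ENNReal.ofReal (√(2 / Real.pi) * √(b - a) / σ) := by
  have variance_ne_zero : (σ ^ 2).toNNReal ≠ 0 := (Real.toNNReal_pos.2 (by positivity)).ne'
  have sqrt_variance : √(2 * Real.pi * (σ ^ 2).toNNReal) = √(2 * Real.pi) * σ := by
    rw [Real.coe_toNNReal _ (sq_nonneg σ), Real.sqrt_mul (by positivity), Real.sqrt_sq hσ.le]
  have constant_eq : (√(2 * Real.pi))⁻¹ * 2 = √(2 / Real.pi) := by
    rw [Real.sqrt_mul zero_le_two, Real.sqrt_div zero_le_two]
    field_simp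
    exact (Real.sq_sqrt zero_le_two).symm
  calc gaussianReal μ ((σ ^ 2).toNNReal) {y : ℝ | y ^ 2 ∈ Set.Icc a b}
      ≤ ENNReal.ofReal (√(2 * Real.pi * (σ ^ 2).toNNReal))⁻¹
          * volume {y : ℝ | y ^ 2 ∈ Set.Icc a b} :=
        gaussianReal_le_smul_volume μ variance_ne_zero _
    _ ≤ ENNReal.ofReal (√(2 * Real.pi) * σ)⁻¹ * ENNReal.ofReal (2 * √(b - a)) := by
        rw [sqrt_variance]
        gcongr
        exact volume_setOf_sq_mem_Icc_le a b
    _ = ENNReal.ofReal (√(2 / Real.pi) * √(b - a) / σ) := by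
        rw [← ENNReal.ofReal_mul (by positivity), ← constant_eq]
        congr 1
        ring

/-- Let `Y` be a one-dimensional Gaussian random variable with arbitrary
mean and standard deviation `σ ≤ 1`. There is an absolute constant `c > 0` such that for every
interval `I` of length `ε ≤ 1`, `ℙ(Y² ∈ I) ≤ c·√ε/σ`. -/
theorem squared_gaussian_interval :
    ∃ c : ℝ, 0 < c ∧
      ∀ (μ σ : ℝ), 0 < σ → σ ≤ 1 →
        ∀ ε : ℝ, 0 ≤ ε → ε ≤ 1 →
          ∀ t : ℝ,
            gaussianReal μ ((σ ^ 2).toNNReal) {y : ℝ | y ^ 2 ∈ Set.Icc t (t + ε)}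
              ≤ ENNReal.ofReal (c * Real.sqrt ε / σ) := by
  refine ⟨√(2 / Real.pi), by positivity, fun μ σ hσ _ ε _ _ t => ?_⟩
  simpa only [add_sub_cancel_left] using squared_gaussian_interval_general μ hσ t (t + ε)
end
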